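/- arXiv:math/0401313 — 2 statements merged into one kernel-verified Lean document; each statement's English description precedes it below -/
import Mathlib

section
/- Let H=(V,E,w) be a honeycomb having at least one nonintegral vertex. Then there exists an open legal path or a legal cycle P=(v₀,q₁,v₁,…,q_k,v_k) in H such that: (i) each edge e of H occurs in P at most twice, and if it occurs exactly twice then P traverses e in both directions (i.e., e=q_i=q_j with i<j implies v_i=v_{j−1}); (ii) if an edge e occurs in P twice, then w(e)>1; and (iii) for each vertex v of H, the number of times P turns at v does not exceed min{2, |div_w(v)|}. -/
open scoped BigOperators

attribute [local instance] Classical.propDecidable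

noncomputable section

/-- Points of the plane. -/
abbrev Pt : Type := ℝ × ℝ

/-- Inner product on the plane. -/
def pdot (a b : Pt) : ℝ := a.1 * b.1 + a.2 * b.2

/-- The three generating vectors ξ₁ = (1,0), ξ₂ = (−1/2, √3/2), ξ₃ = (−1/2, −√3/2). -/
noncomputable def xiv : Fin 3 → Pt
  | 0 => ((1 : ℝ), (0 : ℝ))
  | 1 => (-(1 / 2 : ℝ), Real.sqrt 3 / 2)
  | 2 => (-(1 / 2 : ℝ), -(Real.sqrt 3 / 2))

/-- Dual coordinates d_i(x) = −x·ξ_i. -/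
noncomputable def dcoord (i : Fin 3) (x : Pt) : ℝ := -(pdot x (xiv i))

/-- Direction of the ray Ξ_i^s(·): ξ_i rotated by −90° for s = +(true), by +90° for
s = −(false), so that Ξ_i⁺(v)−v, ℝ₊ξ_i, Ξ_i⁻(v)−v follow anticlockwise. -/
noncomputable def rayDir (i : Fin 3) (s : Bool) : Pt :=
  if s then ((xiv i).2, -(xiv i).1) else (-(xiv i).2, (xiv i).1)

/-- The ray Ξ_i^s(v). -/
def XiRay (i : Fin 3) (s : Bool) (v : Pt) : Set Pt :=
  {x | ∃ t : ℝ, 0 ≤ t ∧ x = v + t • rayDir i s}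

/-- A finite line (nondegenerate segment). -/
def IsSegL (S : Set Pt) : Prop := ∃ a b : Pt, a ≠ b ∧ S = segment ℝ a b

/-- A semiinfinite line (ray) with end a. -/
def IsRayFrom (a : Pt) (S : Set Pt) : Prop :=
  ∃ d : Pt, d ≠ 0 ∧ S = {x | ∃ t : ℝ, 0 ≤ t ∧ x = a + t • d}

/-- A semiinfinite line (ray). -/
def IsRayL (S : Set Pt) : Prop := ∃ a : Pt, IsRayFrom a S

/-- A fully infinite line. -/
def IsFullLineL (S : Set Pt) : Prop := ∃ a d : Pt, d ≠ 0 ∧ S = {x | ∃ t : ℝ, x = a + t • d}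

/-- A line: a segment, a ray or a full line. -/
def IsLineL (S : Set Pt) : Prop := IsSegL S ∨ IsRayL S ∨ IsFullLineL S

/-- `S` is perpendicular to ξ_i, i.e. the dual coordinate d_i is constant on S. -/
def PerpTo (i : Fin 3) (S : Set Pt) : Prop := ∀ x ∈ S, ∀ y ∈ S, pdot (x - y) (xiv i) = 0

/-- w_i^s(v): the total weight of the lines of the system whose intersection with
Ξ_i^s(v) contains v and is a line (not a point). -/
noncomputable def wis (L : Finset (Set Pt)) (w : Set Pt → ℤ) (i : Fin 3) (s : Bool)
    (v : Pt) : ℤ :=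
  ∑ ℓ ∈ L.filter (fun ℓ => v ∈ ℓ ∧ IsLineL (ℓ ∩ XiRay i s v)), w ℓ

/-- A Ξ-system: a finite set of lines, each perpendicular to some ξ_i. -/
def IsXiSystem (L : Finset (Set Pt)) : Prop := ∀ ℓ ∈ L, IsLineL ℓ ∧ ∃ i : Fin 3, PerpTo i ℓ

/-- A pre-honeycomb: a Ξ-system with all w_i^s(v) nonnegative satisfying the
divergency (zero-tension) condition at every point. -/
def IsPreHoneycomb (L : Finset (Set Pt)) (w : Set Pt → ℤ) : Prop :=
  IsXiSystem L ∧ (∀ (v : Pt) (i : Fin 3) (s : Bool), 0 ≤ wis L w i s v) ∧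
  ∀ (v : Pt) (i j : Fin 3),
    wis L w i true v - wis L w i false v = wis L w j true v - wis L w j false v

/-- The divergency div_w(v). -/
noncomputable def divw (L : Finset (Set Pt)) (w : Set Pt → ℤ) (v : Pt) : ℤ :=
  wis L w 0 true v - wis L w 0 false v

/-- An interior (non-end) point of a line. -/
def InteriorPt (S : Set Pt) (x : Pt) : Prop :=
  x ∈ S ∧ ∃ d : Pt, d ≠ 0 ∧ ∃ ε : ℝ, 0 < ε ∧ ∀ t : ℝ, |t| ≤ ε → x + t • d ∈ S

/-- `v` is an end of the line `S` (so `S` is incident to `v` as a graph edge). -/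
def IsEnd (v : Pt) (S : Set Pt) : Prop := v ∈ S ∧ ¬ InteriorPt S v

/-- A honeycomb: a (non-standard) planar graph with a nonempty finite vertex set, whose
edges are positively weighted lines, each vertex incident with at least 3 edges, no
interior point of an edge lying on another edge, the ends of edges being vertices, and
the weighted edge set forming a pre-honeycomb. -/
structure Honeycomb : Type where
  verts : Finset Pt
  edges : Finset (Set Pt)
  w : Set Pt → ℤ
  verts_nonempty : verts.Nonempty
  degree : ∀ v ∈ verts, 3 ≤ (edges.filter fun e => IsEnd v e).card
  no_cross : ∀ e ∈ edges, ∀ e' ∈ edges, e ≠ e' → ∀ x : Pt, InteriorPt e x → x ∉ e'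
  w_pos : ∀ e ∈ edges, 0 < w e
  ends_mem : ∀ e ∈ edges, ∀ x : Pt, IsEnd x e → x ∈ verts
  edge_touch : ∀ e ∈ edges, ∃ v ∈ verts, v ∈ e
  pre : IsPreHoneycomb edges w

/-- The edge `e` is nonintegral: its constant dual coordinate is not an integer. -/
def NonIntegralEdge (e : Set Pt) : Prop :=
  ∃ i : Fin 3, PerpTo i e ∧ ∀ x ∈ e, ∀ z : ℤ, dcoord i x ≠ (z : ℝ)

/-- The edge `e` (incident to v, contained in Ξ_i^s(v)) is dominating at v. -/
def Dominating (H : Honeycomb) (v : Pt) (e : Set Pt) : Prop :=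
  ∃ (i : Fin 3) (s : Bool), IsEnd v e ∧ e ⊆ XiRay i s v ∧
    wis H.edges H.w i (!s) v < wis H.edges H.w i s v

/-- The edges e, e' are opposite to each other at v. -/
def OppositeAt (v : Pt) (e e' : Set Pt) : Prop :=
  ∃ (i : Fin 3) (s : Bool), e ⊆ XiRay i s v ∧ e' ⊆ XiRay i (!s) v

/-- A legal pair at v: two distinct nonintegral edges incident to v which are either
opposite at v or both dominating at v. -/
def LegalPair (H : Honeycomb) (v : Pt) (e e' : Set Pt) : Prop :=
  e ≠ e' ∧ NonIntegralEdge e ∧ NonIntegralEdge e' ∧ IsEnd v e ∧ IsEnd v e' ∧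
  (OppositeAt v e e' ∨ (Dominating H v e ∧ Dominating H v e'))

/-- `(v 0, q 1, v 1, …, q k, v k)` is a path in H: the q i are edges of H, the inner
edges q 2, …, q (k−1) are finite with ends v (i−1), v i; q 1 is finite with ends
v 0, v 1 or semiinfinite with end v 1 and dummy v 0 = none, and symmetrically for
q k. -/
def IsPathOf (H : Honeycomb) (k : ℕ) (q : ℕ → Set Pt) (v : ℕ → Option Pt) : Prop :=
  1 ≤ k ∧
  (∀ i : ℕ, 1 ≤ i → i ≤ k → q i ∈ H.edges) ∧
  (∀ i : ℕ, 2 ≤ i → i ≤ k - 1 →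
    ∃ a b : Pt, v (i - 1) = some a ∧ v i = some b ∧ a ≠ b ∧ q i = segment ℝ a b) ∧
  ((∃ a b : Pt, v 0 = some a ∧ v 1 = some b ∧ a ≠ b ∧ q 1 = segment ℝ a b) ∨
    (v 0 = none ∧ ∃ b : Pt, v 1 = some b ∧ IsRayFrom b (q 1))) ∧
  (1 < k →
    ((∃ a b : Pt, v (k - 1) = some a ∧ v k = some b ∧ a ≠ b ∧ q k = segment ℝ a b) ∨
      (v k = none ∧ ∃ a : Pt, v (k - 1) = some a ∧ IsRayFrom a (q k))))

/-- A legal path: every pair of consecutive edges is a legal pair at their common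
vertex. -/
def IsLegalPath (H : Honeycomb) (k : ℕ) (q : ℕ → Set Pt) (v : ℕ → Option Pt) : Prop :=
  IsPathOf H k q v ∧
  ∀ i : ℕ, 1 ≤ i → i < k → ∃ u : Pt, v i = some u ∧ LegalPair H u (q i) (q (i + 1))

/-- The number of times the path (or its cyclic closure, when `wrap = true`) turns at
the vertex u, i.e. the number of its bends at u. -/
noncomputable def turnCount (k : ℕ) (q : ℕ → Set Pt) (v : ℕ → Option Pt) (wrap : Bool)
    (u : Pt) : ℕ :=
  ((Finset.Ico 1 k).filter fun i => v i = some u ∧ ¬ OppositeAt u (q i) (q (i + 1))).card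
    + (if wrap = true ∧ v 0 = some u ∧ ¬ OppositeAt u (q k) (q 1) then 1 else 0)

/-!
Build a path edge by edge, never leaving a vertex without a legal way on. On arriving at `u` along
a nondominating edge, go straight; on the first arrival along a dominating edge, turn to another
dominating edge, which exists since all three differences `w_i⁺(u) - w_i⁻(u)` agree and at least
two of the `d_i(u)` are not integers. On a later such arrival, let the last bend at `u` lead from
`e` to `f`. If the path does not arrive along `f`, it closes up to a cycle through a turn onto `f`.
If it does, go straight or, when `f` has no opposite edge, turn back to `e`; in that last case
`|div_w(u)| = w(f) > 1`, because `f` is used a second time.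

That a repeated edge `e` has weight more than one is maintained along the way: let `e` be about to
be traversed backwards from `u`. If `e` is not dominating, then its predecessor `f` is the opposite
edge, which the path took after `e` the first time, whence `1 < w(f)`; the path never turned from
another edge onto `f` at `u`, so `f` is not dominating either, and `w(f) ≤ w(e)`. Otherwise either
some lighter edge lies opposite to `e`, or `w(e) = |div_w(u)|` and the path turns at `u` for the
second time. Since no edge is traversed twice in the same direction, the path ends: it closes up,
or runs off to infinity, and in the latter case the same construction is started from its last
edge, traversed inwards.
-/

/-! ### Directions -/

lemma pdot_sub (x y z : Pt) : pdot (x - y) z = pdot x z - pdot y z := by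
  simp only [pdot, Prod.fst_sub, Prod.snd_sub]
  ring

lemma pdot_smul (t : ℝ) (x y : Pt) : pdot (t • x) y = t * pdot x y := by
  simp only [pdot, Prod.smul_fst, Prod.smul_snd, smul_eq_mul]
  ring

lemma sum_dcoord (x : Pt) : ∑ i, dcoord i x = 0 := by
  simp only [Fin.sum_univ_three, dcoord, pdot, xiv]
  ring

lemma pdot_rayDir_eq_zero_iff {i j : Fin 3} {s : Bool} :
    pdot (rayDir i s) (xiv j) = 0 ↔ i = j := by
  fin_cases i <;> fin_cases j <;> cases s <;> simp [pdot, rayDir, xiv] <;> ring_nf <;>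
    first | trivial | positivity

lemma rayDir_ne_zero (i : Fin 3) (s : Bool) : rayDir i s ≠ 0 := fun h ↦ by
  have hdot : pdot (rayDir i s) (xiv (i + 1)) = 0 := by simp [h, pdot]
  simpa using pdot_rayDir_eq_zero_iff.1 hdot

lemma rayDir_not (i : Fin 3) (s : Bool) : rayDir i (!s) = -rayDir i s := by
  cases s <;> simp [rayDir]

lemma smul_rayDir_inj {i j : Fin 3} {s s' : Bool} {t t' : ℝ} (ht : 0 < t) (ht' : 0 ≤ t')
    (h : t • rayDir i s = t' • rayDir j s') : i = j ∧ s = s' := by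
  have hij : i = j := by
    have hdot : t * pdot (rayDir i s) (xiv j) = 0 := by
      rw [← pdot_smul, h, pdot_smul, pdot_rayDir_eq_zero_iff.2 rfl, mul_zero]
    exact pdot_rayDir_eq_zero_iff.1 ((mul_eq_zero.1 hdot).resolve_left ht.ne')
  subst hij
  refine ⟨rfl, by_contra fun hs ↦ ?_⟩
  have hsum : (t + t') • rayDir i s = 0 := by
    rw [add_smul, h, Bool.eq_not_of_ne (Ne.symm hs), rayDir_not, smul_neg, neg_add_cancel]
  exact (smul_ne_zero (by positivity) (rayDir_ne_zero i s)) hsum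

lemma exists_eq_smul_rayDir {i : Fin 3} {x : Pt} (h : pdot x (xiv i) = 0) (s : Bool) :
    ∃ c : ℝ, x = c • rayDir i s := by
  suffices ∃ c : ℝ, x = c • rayDir i true by
    obtain ⟨c, rfl⟩ := this
    cases s
    · exact ⟨-c, by rw [← Bool.not_true, rayDir_not, smul_neg, neg_smul, neg_neg]⟩
    · exact ⟨c, rfl⟩
  have hxi : (xiv i).1 ≠ 0 := by fin_cases i <;> simp [xiv]
  rw [pdot] at h
  refine ⟨-x.2 / (xiv i).1, Prod.ext ?_ ?_⟩ <;>
    simp only [rayDir, if_true, Prod.smul_fst, Prod.smul_snd, smul_eq_mul] <;> field_simp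
  linarith

lemma dcoord_eq_of_mem_XiRay {i : Fin 3} {s : Bool} {u x : Pt} (hx : x ∈ XiRay i s u) :
    dcoord i x = dcoord i u := by
  obtain ⟨t, -, rfl⟩ := hx
  have hdot : pdot (u + t • rayDir i s - u) (xiv i) = 0 := by
    rw [add_sub_cancel_left, pdot_smul, pdot_rayDir_eq_zero_iff.2 rfl, mul_zero]
  rw [pdot_sub, sub_eq_zero] at hdot
  rw [dcoord, dcoord, hdot]

lemma XiRay_eq_of_mem {i j : Fin 3} {s s' : Bool} {u x : Pt} (hx : x ≠ u)
    (h : x ∈ XiRay i s u) (h' : x ∈ XiRay j s' u) : i = j ∧ s = s' := by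
  obtain ⟨t, ht, rfl⟩ := h
  obtain ⟨t', ht', h⟩ := h'
  have ht0 : t ≠ 0 := by rintro rfl; simp at hx
  exact smul_rayDir_inj (ht.lt_of_ne' ht0) ht' (add_left_cancel h)

/-! ### Lines and their ends -/

lemma IsLineL.convex {S : Set Pt} (hS : IsLineL S) : Convex ℝ S := by
  rcases hS with ⟨a, b, -, rfl⟩ | ⟨a, d, -, rfl⟩ | ⟨a, d, -, rfl⟩
  · exact convex_segment a b
  · have himage : {x | ∃ t : ℝ, 0 ≤ t ∧ x = a + t • d} =
        AffineMap.lineMap (k := ℝ) a (a + d) '' Set.Ici 0 := by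
      ext x
      simp [AffineMap.lineMap_apply, eq_comm, add_comm]
    exact himage ▸ (convex_Ici 0).affine_image _
  · have himage : {x | ∃ t : ℝ, x = a + t • d} =
        AffineMap.lineMap (k := ℝ) a (a + d) '' Set.univ := by
      ext x
      simp [AffineMap.lineMap_apply, eq_comm, add_comm]
    exact himage ▸ convex_univ.affine_image _

lemma IsLineL.nontrivial {S : Set Pt} (hS : IsLineL S) : S.Nontrivial := by
  rcases hS with ⟨a, b, hab, rfl⟩ | ⟨a, d, hd, rfl⟩ | ⟨a, d, hd, rfl⟩
  · exact ⟨a, left_mem_segment ℝ a b, b, right_mem_segment ℝ a b, hab⟩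
  · exact ⟨a, ⟨0, le_rfl, by simp⟩, a + d, ⟨1, zero_le_one, by simp⟩, by simpa using hd⟩
  · exact ⟨a, ⟨0, by simp⟩, a + d, ⟨1, by simp⟩, by simpa using hd⟩

lemma interiorPt_add_smul {S : Set Pt} (hS : Convex ℝ S) {u d : Pt} (hd : d ≠ 0) {a b t : ℝ}
    (ha : u + a • d ∈ S) (hb : u + b • d ∈ S) (hat : a < t) (htb : t < b) :
    InteriorPt S (u + t • d) := by
  have hmem : ∀ r ∈ Set.Icc a b, u + r • d ∈ S := by
    have hpre := (hS.affine_preimage (AffineMap.lineMap (k := ℝ) u (u + d))).ordConnected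
    simpa [AffineMap.lineMap_apply, add_comm, Set.subset_def] using
      hpre.out (x := a) (y := b) (by simpa [AffineMap.lineMap_apply, add_comm] using ha)
        (by simpa [AffineMap.lineMap_apply, add_comm] using hb)
  refine ⟨hmem t ⟨hat.le, htb.le⟩, d, hd, min (t - a) (b - t), by simp [hat, htb],
    fun r hr ↦ ?_⟩
  rw [add_assoc, ← add_smul]
  rw [abs_le] at hr
  exact hmem _ ⟨by linarith [min_le_left (t - a) (b - t)],
    by linarith [min_le_right (t - a) (b - t)]⟩

lemma InteriorPt.mono {S T : Set Pt} {x : Pt} (hST : S ⊆ T) (h : InteriorPt S x) :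
    InteriorPt T x := by
  obtain ⟨hx, d, hd, ε, hε, hmem⟩ := h
  exact ⟨hST hx, d, hd, ε, hε, fun t ht ↦ hST (hmem t ht)⟩

lemma IsRayFrom.isEnd_iff {a x : Pt} {S : Set Pt} (hS : IsRayFrom a S) : IsEnd x S ↔ x = a := by
  have hconv : Convex ℝ S := IsLineL.convex (Or.inr (Or.inl ⟨a, hS⟩))
  obtain ⟨d, hd, rfl⟩ := hS
  constructor
  · rintro ⟨⟨t, ht, rfl⟩, hnot⟩
    by_contra hne
    have ht0 : t ≠ 0 := by rintro rfl; simp at hne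
    exact hnot (interiorPt_add_smul (a := 0) (b := t + 1) hconv hd ⟨0, le_rfl, rfl⟩
      ⟨t + 1, by linarith, rfl⟩ (ht.lt_of_ne' ht0) (lt_add_one t))
  · rintro rfl
    refine ⟨⟨0, le_rfl, by simp⟩, ?_⟩
    rintro ⟨-, d', hd', ε, hε, hmem⟩
    obtain ⟨t, ht, hplus⟩ := hmem ε (abs_of_pos hε).le
    obtain ⟨t', ht', hminus⟩ := hmem (-ε) (by rw [abs_neg, abs_of_pos hε])
    have hplus : ε • d' = t • d := add_left_cancel hplus
    have hminus : (-ε) • d' = t' • d := add_left_cancel hminus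
    have hsum : (t + t') • d = 0 := by rw [add_smul, ← hplus, ← hminus, neg_smul, add_neg_cancel]
    have ht0 : t = 0 := by linarith [(smul_eq_zero.1 hsum).resolve_right hd]
    rw [ht0, zero_smul] at hplus
    exact smul_ne_zero hε.ne' hd' hplus

lemma isEnd_segment_left {a b : Pt} (hab : a ≠ b) : IsEnd a (segment ℝ a b) := by
  refine ⟨left_mem_segment ℝ a b, fun hint ↦ ?_⟩
  have hsub : segment ℝ a b ⊆ {x | ∃ t : ℝ, 0 ≤ t ∧ x = a + t • (b - a)} := by
    rw [segment_eq_image']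
    rintro _ ⟨t, ht, rfl⟩
    exact ⟨t, ht.1, rfl⟩
  have hray : IsRayFrom a {x | ∃ t : ℝ, 0 ≤ t ∧ x = a + t • (b - a)} :=
    ⟨b - a, sub_ne_zero.2 hab.symm, rfl⟩
  exact (hray.isEnd_iff.2 rfl).2 (hint.mono hsub)

lemma isEnd_segment_iff {a b x : Pt} (hab : a ≠ b) :
    IsEnd x (segment ℝ a b) ↔ x = a ∨ x = b := by
  constructor
  · rintro ⟨hx, hnot⟩
    rw [segment_eq_image'] at hx
    obtain ⟨t, ⟨h0, h1⟩, rfl⟩ := hx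
    by_contra! hne
    have ht0 : t ≠ 0 := by rintro rfl; simp at hne
    have ht1 : t ≠ 1 := by rintro rfl; simp at hne
    exact hnot (interiorPt_add_smul (a := 0) (b := 1) (convex_segment a b)
      (sub_ne_zero.2 hab.symm) (by simpa using left_mem_segment ℝ a b)
      (by simpa using right_mem_segment ℝ a b) (h0.lt_of_ne' ht0) (h1.lt_of_ne ht1))
  · rintro (rfl | rfl)
    · exact isEnd_segment_left hab
    · rw [segment_symm]
      exact isEnd_segment_left hab.symm

lemma IsFullLineL.not_isEnd {S : Set Pt} (hS : IsFullLineL S) (x : Pt) : ¬IsEnd x S := by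
  rintro ⟨hx, hnot⟩
  have hconv : Convex ℝ S := IsLineL.convex (Or.inr (Or.inr hS))
  obtain ⟨a, d, hd, rfl⟩ := hS
  obtain ⟨t, rfl⟩ := hx
  exact hnot (interiorPt_add_smul (a := t - 1) (b := t + 1) hconv hd ⟨_, rfl⟩ ⟨_, rfl⟩
    (sub_one_lt t) (lt_add_one t))

lemma IsEnd.exists_subset_XiRay {S : Set Pt} {i : Fin 3} {u : Pt} (hu : IsEnd u S)
    (hS : Convex ℝ S) (hi : PerpTo i S) : ∃ s, S ⊆ XiRay i s u := by
  by_contra! hnot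
  have hparam : ∀ s, ∃ c : ℝ, c < 0 ∧ u + c • rayDir i s ∈ S := fun s ↦ by
    obtain ⟨x, hx, hxs⟩ := Set.not_subset.1 (hnot s)
    obtain ⟨c, hc⟩ := exists_eq_smul_rayDir (hi x hx u hu.1) s
    obtain rfl : x = u + c • rayDir i s := by rw [← hc, add_sub_cancel]
    exact ⟨c, not_le.1 fun hc0 ↦ hxs ⟨c, hc0, rfl⟩, hx⟩
  obtain ⟨a, ha, hSa⟩ := hparam true
  obtain ⟨b, hb, hSb⟩ := hparam false
  have hSb : u + (-b) • rayDir i true ∈ S := by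
    rwa [← Bool.not_true, rayDir_not, smul_neg, ← neg_smul] at hSb
  refine hu.2 ?_
  simpa using interiorPt_add_smul hS (rayDir_ne_zero i true) hSa hSb ha (neg_pos.2 hb)

lemma exists_interiorPt_add_smul {S : Set Pt} (hS : IsLineL S) {i : Fin 3} {s : Bool} {u : Pt}
    (hu : u ∈ S) (hs : S ⊆ XiRay i s u) :
    ∃ b : ℝ, 0 < b ∧ ∀ t : ℝ, 0 < t → t < b → InteriorPt S (u + t • rayDir i s) := by
  obtain ⟨x, hx, hxu⟩ := hS.nontrivial.exists_ne u
  obtain ⟨b, hb, rfl⟩ := hs hx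
  have hb0 : b ≠ 0 := by rintro rfl; simp at hxu
  exact ⟨b, hb.lt_of_ne' hb0, fun t ht htb ↦
    interiorPt_add_smul (a := 0) hS.convex (rayDir_ne_zero i s) (by simpa using hu) hx ht htb⟩

lemma XiRay_eq_of_subset {S : Set Pt} (hS : S.Nontrivial) {i j : Fin 3} {s s' : Bool} {u : Pt}
    (h : S ⊆ XiRay i s u) (h' : S ⊆ XiRay j s' u) : i = j ∧ s = s' := by
  obtain ⟨x, hx, hxu⟩ := hS.exists_ne u
  exact XiRay_eq_of_mem hxu (h hx) (h' hx)

lemma OppositeAt.symm {u : Pt} {e f : Set Pt} (h : OppositeAt u e f) : OppositeAt u f e := by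
  obtain ⟨i, s, he, hf⟩ := h
  exact ⟨i, !s, hf, by rwa [Bool.not_not]⟩

lemma OppositeAt.ne {u : Pt} {e f : Set Pt} (h : OppositeAt u e f) (he : e.Nontrivial) :
    e ≠ f := by
  rintro rfl
  obtain ⟨i, s, hs, hs'⟩ := h
  simpa using (XiRay_eq_of_subset he hs hs').2

lemma nonIntegralEdge_iff {S : Set Pt} (hS : S.Nontrivial) {i : Fin 3} {s : Bool} {u : Pt}
    (hu : u ∈ S) (hs : S ⊆ XiRay i s u) :
    NonIntegralEdge S ↔ ∀ z : ℤ, dcoord i u ≠ z := by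
  constructor
  · rintro ⟨j, hperp, hj⟩
    obtain ⟨x, hx, hxu⟩ := hS.exists_ne u
    obtain ⟨t, -, rfl⟩ := hs hx
    have ht0 : t ≠ 0 := by rintro rfl; simp at hxu
    have hdot := hperp _ hx u hu
    rw [add_sub_cancel_left, pdot_smul, mul_eq_zero, pdot_rayDir_eq_zero_iff] at hdot
    obtain rfl := hdot.resolve_left ht0
    exact hj u hu
  · intro hi
    refine ⟨i, fun x hx y hy ↦ ?_, fun x hx ↦ dcoord_eq_of_mem_XiRay (hs hx) ▸ hi⟩
    have hxy := (dcoord_eq_of_mem_XiRay (hs hx)).trans (dcoord_eq_of_mem_XiRay (hs hy)).symm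
    rw [pdot_sub, sub_eq_zero]
    exact neg_injective hxy

lemma exists_ne_forall_dcoord_ne {u : Pt} {i : Fin 3} (hi : ∀ z : ℤ, dcoord i u ≠ z) :
    ∃ j ≠ i, ∀ z : ℤ, dcoord j u ≠ z := by
  by_contra! hint
  choose! z hz using hint
  refine hi (-∑ j ∈ Finset.univ.erase i, z j) ?_
  rw [Int.cast_neg, Int.cast_sum,
    ← Finset.sum_congr rfl fun j hj ↦ hz j (Finset.ne_of_mem_erase hj), eq_neg_iff_add_eq_zero,
    Finset.add_sum_erase _ (fun j ↦ dcoord j u) (Finset.mem_univ i), sum_dcoord]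

/-! ### Edges at a vertex -/

namespace Honeycomb

variable {H : Honeycomb} {u : Pt} {e f : Set Pt} {i : Fin 3} {s : Bool}

lemma isEnd_of_mem (hu : u ∈ H.verts) (he : e ∈ H.edges) (hue : u ∈ e) : IsEnd u e := by
  refine ⟨hue, fun hint ↦ ?_⟩
  obtain ⟨f, hf, hfe⟩ := Finset.exists_mem_ne (Nat.lt_of_succ_lt (H.degree u hu)) e
  rw [Finset.mem_filter] at hf
  exact H.no_cross e he f hf.1 hfe.symm u hint hf.2.1

lemma isSegL_or_isRayL (he : e ∈ H.edges) : IsSegL e ∨ IsRayL e := by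
  rcases (H.pre.1 e he).1 with hseg | hray | hfull
  · exact Or.inl hseg
  · exact Or.inr hray
  · obtain ⟨v, hv, hve⟩ := H.edge_touch e he
    exact absurd (isEnd_of_mem hv he hve) (hfull.not_isEnd v)

lemma exists_subset_XiRay (he : e ∈ H.edges) (hu : IsEnd u e) : ∃ i s, e ⊆ XiRay i s u := by
  obtain ⟨hline, i, hi⟩ := H.pre.1 e he
  exact ⟨i, hu.exists_subset_XiRay hline.convex hi⟩

lemma eq_of_subset_XiRay (he : e ∈ H.edges) (hf : f ∈ H.edges) (hue : u ∈ e) (huf : u ∈ f)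
    (hes : e ⊆ XiRay i s u) (hfs : f ⊆ XiRay i s u) : e = f := by
  obtain ⟨b, hb, hbe⟩ := exists_interiorPt_add_smul (H.pre.1 e he).1 hue hes
  obtain ⟨c, hc, hcf⟩ := exists_interiorPt_add_smul (H.pre.1 f hf).1 huf hfs
  obtain ⟨t, ht, htbc⟩ := exists_between (lt_min hb hc)
  by_contra hne
  exact H.no_cross e he f hf hne _ (hbe t ht (htbc.trans_le (min_le_left b c)))
    (hcf t ht (htbc.trans_le (min_le_right b c))).1

lemma mem_and_isLineL_inter_iff (hu : u ∈ H.verts) (he : e ∈ H.edges) :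
    u ∈ e ∧ IsLineL (e ∩ XiRay i s u) ↔ u ∈ e ∧ e ⊆ XiRay i s u := by
  refine and_congr_right fun hue ↦ ⟨fun hline ↦ ?_, fun hsub ↦ ?_⟩
  · obtain ⟨j, s', hsub⟩ := exists_subset_XiRay he (isEnd_of_mem hu he hue)
    obtain ⟨x, hx, hxu⟩ := hline.nontrivial.exists_ne u
    obtain ⟨rfl, rfl⟩ := XiRay_eq_of_mem hxu hx.2 (hsub hx.1)
    exact hsub
  · rw [Set.inter_eq_left.2 hsub]
    exact (H.pre.1 e he).1

lemma wis_eq_w (hu : u ∈ H.verts) (he : e ∈ H.edges) (hue : u ∈ e) (hs : e ⊆ XiRay i s u) :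
    wis H.edges H.w i s u = H.w e := by
  have hfilter : H.edges.filter (fun ℓ ↦ u ∈ ℓ ∧ IsLineL (ℓ ∩ XiRay i s u)) = {e} := by
    ext f
    rw [Finset.mem_filter, Finset.mem_singleton]
    constructor
    · rintro ⟨hf, hline⟩
      obtain ⟨huf, hfs⟩ := (mem_and_isLineL_inter_iff hu hf).1 hline
      exact eq_of_subset_XiRay hf he huf hue hfs hs
    · rintro rfl
      exact ⟨he, (mem_and_isLineL_inter_iff hu he).2 ⟨hue, hs⟩⟩
  rw [wis, hfilter, Finset.sum_singleton]

/-- The absolute value `|div_w(u)|` of the divergency at `u`. -/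
def absDiv (H : Honeycomb) (u : Pt) : ℕ := (divw H.edges H.w u).natAbs

lemma absDiv_eq_natAbs_wis_sub (H : Honeycomb) (u : Pt) (i : Fin 3) (s : Bool) :
    H.absDiv u = (wis H.edges H.w i s u - wis H.edges H.w i (!s) u).natAbs := by
  rw [absDiv, divw, H.pre.2.2 u 0 i]
  cases s
  · rw [Bool.not_false, ← Int.natAbs_neg, neg_sub]
  · rfl

lemma wis_sub_wis_not (H : Honeycomb) (u : Pt) (i j : Fin 3) (s : Bool) :
    wis H.edges H.w i s u - wis H.edges H.w i (!s) u =
      wis H.edges H.w j s u - wis H.edges H.w j (!s) u := by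
  have hdiv := H.pre.2.2 u i j
  cases s
  · rw [Bool.not_false]
    omega
  · exact hdiv

end Honeycomb

/-- `e` is a nonintegral edge of `H` incident to `u`; `u` is then a vertex of `H`. -/
structure NonintegralAt (H : Honeycomb) (u : Pt) (e : Set Pt) : Prop where
  mem : e ∈ H.edges
  isEnd : IsEnd u e
  nonintegral : NonIntegralEdge e

section Vertex

variable {H : Honeycomb} {u : Pt} {e f g : Set Pt} {i : Fin 3} {s : Bool}

lemma NonintegralAt.mem_verts (he : NonintegralAt H u e) : u ∈ H.verts :=
  H.ends_mem e he.mem u he.isEnd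

lemma NonintegralAt.nontrivial (he : NonintegralAt H u e) : e.Nontrivial :=
  (H.pre.1 e he.mem).1.nontrivial

lemma NonintegralAt.wis_eq_w (he : NonintegralAt H u e) (hs : e ⊆ XiRay i s u) :
    wis H.edges H.w i s u = H.w e :=
  Honeycomb.wis_eq_w he.mem_verts he.mem he.isEnd.1 hs

lemma NonintegralAt.exists_subset_XiRay (he : NonintegralAt H u e) :
    ∃ i s, e ⊆ XiRay i s u ∧ ∀ z : ℤ, dcoord i u ≠ z := by
  obtain ⟨i, s, hs⟩ := Honeycomb.exists_subset_XiRay he.mem he.isEnd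
  exact ⟨i, s, hs, (nonIntegralEdge_iff he.nontrivial he.isEnd.1 hs).1 he.nonintegral⟩

lemma exists_nonintegralAt_of_wis_pos (hu : u ∈ H.verts) (hi : ∀ z : ℤ, dcoord i u ≠ z)
    (hpos : 0 < wis H.edges H.w i s u) : ∃ e, NonintegralAt H u e ∧ e ⊆ XiRay i s u := by
  obtain ⟨e, he, -⟩ := Finset.exists_ne_zero_of_sum_ne_zero hpos.ne'
  obtain ⟨he, hline⟩ := Finset.mem_filter.1 he
  obtain ⟨hue, hs⟩ := (Honeycomb.mem_and_isLineL_inter_iff hu he).1 hline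
  exact ⟨e, ⟨he, Honeycomb.isEnd_of_mem hu he hue,
    (nonIntegralEdge_iff (H.pre.1 e he).1.nontrivial hue hs).2 hi⟩, hs⟩

lemma NonintegralAt.dominating_iff (he : NonintegralAt H u e) (hs : e ⊆ XiRay i s u) :
    Dominating H u e ↔ wis H.edges H.w i (!s) u < wis H.edges H.w i s u := by
  constructor
  · rintro ⟨j, s', -, hs', hlt⟩
    obtain ⟨rfl, rfl⟩ := XiRay_eq_of_subset he.nontrivial hs hs'
    exact hlt
  · exact fun hlt ↦ ⟨i, s, he.isEnd, hs, hlt⟩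

lemma NonintegralAt.eq_of_oppositeAt (he : NonintegralAt H u e) (hf : NonintegralAt H u f)
    (hg : NonintegralAt H u g) (hef : OppositeAt u e f) (heg : OppositeAt u e g) : f = g := by
  obtain ⟨i, s, hes, hfs⟩ := hef
  obtain ⟨j, s', hes', hgs⟩ := heg
  obtain ⟨rfl, rfl⟩ := XiRay_eq_of_subset he.nontrivial hes hes'
  exact Honeycomb.eq_of_subset_XiRay hf.mem hg.mem hf.isEnd.1 hg.isEnd.1 hfs hgs

lemma NonintegralAt.dominating_iff_of_oppositeAt (he : NonintegralAt H u e)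
    (hf : NonintegralAt H u f) (hef : OppositeAt u e f) :
    Dominating H u e ↔ H.w f < H.w e := by
  obtain ⟨i, s, hes, hfs⟩ := hef
  rw [he.dominating_iff hes, he.wis_eq_w hes, hf.wis_eq_w hfs]

lemma NonintegralAt.not_oppositeAt (he : NonintegralAt H u e) (hf : NonintegralAt H u f)
    (hde : Dominating H u e) (hdf : Dominating H u f) : ¬OppositeAt u e f := fun hef ↦
  lt_asymm ((he.dominating_iff_of_oppositeAt hf hef).1 hde)
    ((hf.dominating_iff_of_oppositeAt he hef.symm).1 hdf)

lemma NonintegralAt.exists_oppositeAt (he : NonintegralAt H u e) (hd : ¬Dominating H u e) :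
    ∃ f, NonintegralAt H u f ∧ OppositeAt u e f := by
  obtain ⟨i, s, hs, hi⟩ := he.exists_subset_XiRay
  rw [he.dominating_iff hs, not_lt, he.wis_eq_w hs] at hd
  obtain ⟨f, hf, hfs⟩ :=
    exists_nonintegralAt_of_wis_pos he.mem_verts hi ((H.w_pos e he.mem).trans_le hd)
  exact ⟨f, hf, i, s, hs, hfs⟩

lemma NonintegralAt.w_eq_absDiv (he : NonintegralAt H u e)
    (hno : ∀ f, NonintegralAt H u f → ¬OppositeAt u e f) : H.w e = H.absDiv u := by
  obtain ⟨i, s, hs, hi⟩ := he.exists_subset_XiRay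
  have hzero : wis H.edges H.w i (!s) u = 0 := by
    refine (H.pre.2.1 u i (!s)).antisymm' (not_lt.1 fun hpos ↦ ?_)
    obtain ⟨f, hf, hfs⟩ := exists_nonintegralAt_of_wis_pos he.mem_verts hi hpos
    exact hno f hf ⟨i, s, hs, hfs⟩
  rw [H.absDiv_eq_natAbs_wis_sub u i s, hzero, he.wis_eq_w hs, sub_zero,
    Int.natAbs_of_nonneg (H.w_pos e he.mem).le]

lemma Dominating.absDiv_pos (hd : Dominating H u e) : 0 < H.absDiv u := by
  obtain ⟨i, s, -, -, hlt⟩ := hd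
  rw [H.absDiv_eq_natAbs_wis_sub u i s, Int.natAbs_pos]
  exact (sub_pos.2 hlt).ne'

lemma NonintegralAt.exists_ne_dominating (he : NonintegralAt H u e) (hd : Dominating H u e) :
    ∃ f, NonintegralAt H u f ∧ e ≠ f ∧ Dominating H u f := by
  obtain ⟨i, s, hs, hi⟩ := he.exists_subset_XiRay
  obtain ⟨j, hji, hj⟩ := exists_ne_forall_dcoord_ne hi
  rw [he.dominating_iff hs, ← sub_pos, H.wis_sub_wis_not u i j s, sub_pos] at hd
  obtain ⟨f, hf, hfs⟩ :=
    exists_nonintegralAt_of_wis_pos he.mem_verts hj ((H.pre.2.1 u j (!s)).trans_lt hd)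
  refine ⟨f, hf, ?_, (hf.dominating_iff hfs).2 hd⟩
  rintro rfl
  exact hji (XiRay_eq_of_subset he.nontrivial hfs hs).1

lemma exists_nonintegralAt (hu : u ∈ H.verts) (hi : ∀ z : ℤ, dcoord i u ≠ z) :
    ∃ e, NonintegralAt H u e := by
  obtain ⟨j, hji, hj⟩ := exists_ne_forall_dcoord_ne hi
  by_contra! hnone
  have hdir : ∀ e ∈ H.edges.filter (IsEnd u), ∃ d : Fin 3 × Bool,
      e ⊆ XiRay d.1 d.2 u ∧ d ∈ ({i, j}ᶜ : Finset (Fin 3)) ×ˢ Finset.univ := fun e he ↦ by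
    rw [Finset.mem_filter] at he
    obtain ⟨l, s, hs⟩ := Honeycomb.exists_subset_XiRay he.1 he.2
    have hint : ¬∀ z : ℤ, dcoord l u ≠ z := fun hl ↦ hnone e ⟨he.1, he.2,
      (nonIntegralEdge_iff (H.pre.1 e he.1).1.nontrivial he.2.1 hs).2 hl⟩
    refine ⟨(l, s), hs, ?_⟩
    simp only [Finset.mem_product, Finset.mem_compl, Finset.mem_insert, Finset.mem_singleton,
      Finset.mem_univ, and_true]
    rintro (rfl | rfl) <;> exact hint ‹_›
  choose! d hd hmem using hdir
  have hinj : Set.InjOn d (H.edges.filter (IsEnd u)) := fun e he f hf hef ↦ by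
    have hes := hd e he
    have hfs := hd f hf
    rw [Finset.mem_coe, Finset.mem_filter] at he hf
    exact Honeycomb.eq_of_subset_XiRay he.1 hf.1 he.2.1 hf.2.1 hes (hef ▸ hfs)
  have hcard : (({i, j}ᶜ : Finset (Fin 3)) ×ˢ (Finset.univ : Finset Bool)).card = 2 := by
    rw [Finset.card_product, Finset.card_compl, Finset.card_pair hji.symm]
    rfl
  have := (H.degree u hu).trans (Finset.card_le_card_of_injOn d hmem hinj)
  omega

lemma NonintegralAt.legalPair_of_oppositeAt (he : NonintegralAt H u e) (hf : NonintegralAt H u f)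
    (hef : OppositeAt u e f) : LegalPair H u e f :=
  ⟨hef.ne he.nontrivial, he.nonintegral, hf.nonintegral, he.isEnd, hf.isEnd, Or.inl hef⟩

lemma NonintegralAt.legalPair_of_dominating (he : NonintegralAt H u e) (hf : NonintegralAt H u f)
    (hne : e ≠ f) (hde : Dominating H u e) (hdf : Dominating H u f) : LegalPair H u e f :=
  ⟨hne, he.nonintegral, hf.nonintegral, he.isEnd, hf.isEnd, Or.inr ⟨hde, hdf⟩⟩

lemma LegalPair.dominating (h : LegalPair H u e f) (hef : ¬OppositeAt u e f) :
    Dominating H u e ∧ Dominating H u f :=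
  h.2.2.2.2.2.resolve_left hef

end Vertex

/-! ### Legal trails -/

/-- The nonintegral edge `e`, traversed from `a` to `b`; as in `IsPathOf`, the missing end of a
semiinfinite edge is `none`. -/
structure IsDart (H : Honeycomb) (a : Option Pt) (e : Set Pt) (b : Option Pt) : Prop where
  mem : e ∈ H.edges
  nonintegral : NonIntegralEdge e
  shape : (∃ x y : Pt, a = some x ∧ b = some y ∧ x ≠ y ∧ e = segment ℝ x y) ∨
    (a = none ∧ ∃ y : Pt, b = some y ∧ IsRayFrom y e) ∨
    (b = none ∧ ∃ x : Pt, a = some x ∧ IsRayFrom x e)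

/-- The set of the indices `i` such that the path `(v 0, q 1, v 1, …, q k, v k)` has a bend at
`v i = u`. -/
def turns (k : ℕ) (q : ℕ → Set Pt) (v : ℕ → Option Pt) (u : Pt) : Finset ℕ :=
  (Finset.Ico 1 k).filter fun i ↦ v i = some u ∧ ¬OppositeAt u (q i) (q (i + 1))

/-- A legal path `(v 0, q 1, v 1, …, q n, v n)` of nonintegral edges which traverses no edge twice
in the same direction. -/
structure IsLegalTrail (H : Honeycomb) (n : ℕ) (q : ℕ → Set Pt) (v : ℕ → Option Pt) : Prop where
  pos : 0 < n
  dart : ∀ i < n, IsDart H (v i) (q (i + 1)) (v (i + 1))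
  legal : ∀ i, 1 ≤ i → i < n → ∃ u, v i = some u ∧ LegalPair H u (q i) (q (i + 1))
  inj : ∀ i < n, ∀ j < n, v i = v j → q (i + 1) = q (j + 1) → i = j

/-- A legal trail whose repeated edges have weight more than one, and in which a second turn at a
vertex `u` is the reverse of the first one and requires `|div_w(u)| > 1`. -/
structure IsTameTrail (H : Honeycomb) (n : ℕ) (q : ℕ → Set Pt) (v : ℕ → Option Pt) : Prop
    extends IsLegalTrail H n q v where
  one_lt_w : ∀ i j, 1 ≤ i → i < j → j ≤ n → q i = q j → 1 < H.w (q j)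
  turn_turn : ∀ u, ∀ i ∈ turns n q v u, ∀ j ∈ turns n q v u, i < j →
    q j = q (i + 1) ∧ q (j + 1) = q i ∧ 1 < H.absDiv u

section Dart

variable {H : Honeycomb} {a b a' b' : Option Pt} {u : Pt} {e : Set Pt}

lemma IsDart.symm (h : IsDart H a e b) : IsDart H b e a := by
  refine ⟨h.mem, h.nonintegral, ?_⟩
  rcases h.shape with ⟨x, y, hx, hy, hxy, he⟩ | hray | hray
  · exact Or.inl ⟨y, x, hy, hx, hxy.symm, he.trans (segment_symm ℝ x y)⟩
  · exact Or.inr (Or.inr hray)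
  · exact Or.inr (Or.inl hray)

lemma IsDart.isEnd_iff (h : IsDart H a e b) (x : Pt) : IsEnd x e ↔ a = some x ∨ b = some x := by
  rcases h.shape with ⟨y, z, rfl, rfl, hyz, rfl⟩ | ⟨rfl, y, rfl, hray⟩ | ⟨rfl, y, rfl, hray⟩
  · simp [isEnd_segment_iff hyz, eq_comm]
  · simp [hray.isEnd_iff, eq_comm]
  · simp [hray.isEnd_iff, eq_comm]

lemma IsDart.ne (h : IsDart H a e b) : a ≠ b := by
  rcases h.shape with ⟨y, z, rfl, rfl, hyz, -⟩ | ⟨rfl, y, rfl, -⟩ | ⟨rfl, y, rfl, -⟩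
  · simpa using hyz
  · simp
  · simp

lemma IsDart.eq_or_swap (h : IsDart H a e b) (h' : IsDart H a' e b') :
    a = a' ∧ b = b' ∨ a = b' ∧ b = a' := by
  have hne := h.ne
  have hne' := h'.ne
  have hends : ∀ x, a = some x ∨ b = some x ↔ a' = some x ∨ b' = some x := fun x ↦ by
    rw [← h.isEnd_iff, ← h'.isEnd_iff]
  clear h h'
  rcases a with _ | a <;> rcases b with _ | b <;> rcases a' with _ | a' <;>
    rcases b' with _ | b' <;> grind

lemma IsDart.nonintegralAt_left (h : IsDart H (some u) e b) : NonintegralAt H u e :=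
  ⟨h.mem, (h.isEnd_iff u).2 (Or.inl rfl), h.nonintegral⟩

lemma IsDart.nonintegralAt_right (h : IsDart H a e (some u)) : NonintegralAt H u e :=
  h.symm.nonintegralAt_left

lemma NonintegralAt.exists_isDart (h : NonintegralAt H u e) : ∃ b, IsDart H (some u) e b := by
  rcases Honeycomb.isSegL_or_isRayL h.mem with ⟨x, y, hxy, he⟩ | ⟨x, hx⟩
  · have hdart : IsDart H (some x) e (some y) :=
      ⟨h.mem, h.nonintegral, Or.inl ⟨x, y, rfl, rfl, hxy, he⟩⟩
    rcases (hdart.isEnd_iff u).1 h.isEnd with hu | hu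
    · exact ⟨some y, hu ▸ hdart⟩
    · exact ⟨some x, hu ▸ hdart.symm⟩
  · obtain rfl := hx.isEnd_iff.1 h.isEnd
    exact ⟨none, h.mem, h.nonintegral, Or.inr (Or.inr ⟨rfl, u, rfl, hx⟩)⟩

end Dart

section Turns

variable {k m i : ℕ} {q q' : ℕ → Set Pt} {v v' : ℕ → Option Pt} {u : Pt}

lemma mem_turns : i ∈ turns k q v u ↔
    (1 ≤ i ∧ i < k) ∧ v i = some u ∧ ¬OppositeAt u (q i) (q (i + 1)) := by
  rw [turns, Finset.mem_filter, Finset.mem_Ico]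

lemma turns_congr (hq : ∀ i ≤ k, q' i = q i) (hv : ∀ i ≤ k, v' i = v i) :
    turns k q' v' u = turns k q v u := by
  refine Finset.filter_congr fun i hi ↦ ?_
  have hik := (Finset.mem_Ico.1 hi).2
  rw [hq i hik.le, hq (i + 1) hik, hv i hik.le]

lemma add_mem_turns (hi : i ∈ turns k (fun i ↦ q (m + i)) (fun i ↦ v (m + i)) u) :
    m + i ∈ turns (m + k) q v u := by
  rw [mem_turns] at hi ⊢
  exact ⟨by omega, hi.2⟩

lemma card_turns_add_le :
    (turns k (fun i ↦ q (m + i)) (fun i ↦ v (m + i)) u).card ≤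
      ((turns (m + k) q v u).filter (m < ·)).card := by
  refine Finset.card_le_card_of_injOn (m + ·) (fun i hi ↦ ?_)
    (fun i _ j _ hij ↦ Nat.add_left_cancel hij)
  rw [Finset.mem_coe, Finset.mem_filter]
  exact ⟨add_mem_turns hi, Nat.lt_add_of_pos_right (mem_turns.1 hi).1.1⟩

end Turns

namespace IsLegalTrail

variable {H : Honeycomb} {n i j : ℕ} {q : ℕ → Set Pt} {v : ℕ → Option Pt} {u : Pt}

lemma dart_pred (h : IsLegalTrail H n q v) (hi : 1 ≤ i) (hin : i ≤ n) :
    IsDart H (v (i - 1)) (q i) (v i) := by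
  simpa [Nat.sub_add_cancel hi] using h.dart (i - 1) (by omega)

lemma nonintegralAt (h : IsLegalTrail H n q v) (hi : 1 ≤ i) (hin : i ≤ n) (hu : v i = some u) :
    NonintegralAt H u (q i) :=
  (hu ▸ h.dart_pred hi hin).nonintegralAt_right

lemma nonintegralAt_succ (h : IsLegalTrail H n q v) (hin : i < n) (hu : v i = some u) :
    NonintegralAt H u (q (i + 1)) :=
  (hu ▸ h.dart i hin).nonintegralAt_left

lemma legalPair (h : IsLegalTrail H n q v) (hi : 1 ≤ i) (hin : i < n) (hu : v i = some u) :
    LegalPair H u (q i) (q (i + 1)) := by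
  obtain ⟨u', hu', hlegal⟩ := h.legal i hi hin
  obtain rfl : u' = u := Option.some_injective _ (hu'.symm.trans hu)
  exact hlegal

lemma dominating_of_mem_turns (h : IsLegalTrail H n q v) (hi : i ∈ turns n q v u) :
    Dominating H u (q i) ∧ Dominating H u (q (i + 1)) := by
  obtain ⟨⟨hi1, hin⟩, hu, hno⟩ := mem_turns.1 hi
  exact (h.legalPair hi1 hin hu).dominating hno

lemma inj_right (h : IsLegalTrail H n q v) (hi : 1 ≤ i) (hin : i ≤ n) (hj : 1 ≤ j) (hjn : j ≤ n)
    (hv : v i = v j) (hq : q i = q j) : i = j := by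
  have hdi := h.dart_pred hi hin
  have hdj := h.dart_pred hj hjn
  rcases (hq ▸ hdi).eq_or_swap hdj with hsame | hswap
  · have := h.inj (i - 1) (by omega) (j - 1) (by omega) hsame.1
      (by rwa [Nat.sub_add_cancel hi, Nat.sub_add_cancel hj])
    omega
  · exact absurd (hswap.1.trans hv.symm) hdi.ne

lemma eq_pred_of_eq (h : IsLegalTrail H n q v) (hi : 1 ≤ i) (hij : i < j) (hjn : j ≤ n)
    (hq : q i = q j) : v i = v (j - 1) := by
  have hdi := h.dart_pred hi (by omega)
  rcases (hq ▸ hdi).eq_or_swap (h.dart_pred (by omega) hjn) with hsame | hswap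
  · exact absurd (h.inj_right hi (by omega) (by omega) hjn hsame.2 hq) hij.ne
  · exact hswap.2

lemma isLegalPath (h : IsLegalTrail H n q v) (hn : 1 < n) : IsLegalPath H n q v := by
  have hsome : ∀ i, 1 ≤ i → i < n → v i ≠ none := fun i hi hin hnone ↦ by
    obtain ⟨u, hu, -⟩ := h.legal i hi hin
    exact Option.some_ne_none u (hu.symm.trans hnone)
  refine ⟨⟨h.pos, fun i hi hin ↦ (h.dart_pred hi hin).mem, fun i hi hin ↦ ?_, ?_, fun _ ↦ ?_⟩,
    h.legal⟩
  · rcases (h.dart_pred (i := i) (by omega) (by omega)).shape with hseg | ⟨hnone, -⟩ | ⟨hnone, -⟩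
    · exact hseg
    · exact absurd hnone (hsome (i - 1) (by omega) (by omega))
    · exact absurd hnone (hsome i (by omega) (by omega))
  · rcases (h.dart 0 h.pos).shape with hseg | hray | ⟨hnone, -⟩
    · exact Or.inl hseg
    · exact Or.inr hray
    · exact absurd hnone (hsome 1 le_rfl hn)
  · rcases (h.dart_pred h.pos le_rfl).shape with hseg | ⟨hnone, -⟩ | hray
    · exact Or.inl hseg
    · exact absurd hnone (hsome (n - 1) (by omega) (by omega))
    · exact Or.inr hray

lemma card_filter_eq_le_two (h : IsLegalTrail H n q v) (e : Set Pt) :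
    ((Finset.Icc 1 n).filter fun i ↦ q i = e).card ≤ 2 := by
  have hmem : ∀ i ∈ (Finset.Icc 1 n).filter fun i ↦ q i = e, (1 ≤ i ∧ i ≤ n) ∧ q i = e :=
    fun i hi ↦ by rwa [Finset.mem_filter, Finset.mem_Icc] at hi
  rcases ((Finset.Icc 1 n).filter fun i ↦ q i = e).eq_empty_or_nonempty with hempty | ⟨j, hj⟩
  · simp [hempty]
  obtain ⟨⟨hj1, hjn⟩, hje⟩ := hmem j hj
  refine (Finset.card_le_card_of_injOn v (t := {v (j - 1), v j}) (fun i hi ↦ ?_)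
    fun i hi i' hi' hv ↦ ?_).trans Finset.card_le_two
  · obtain ⟨⟨hi1, hin⟩, hie⟩ := hmem i hi
    rcases (hie ▸ h.dart_pred hi1 hin).eq_or_swap (hje ▸ h.dart_pred hj1 hjn) with hd | hd
    · simp [hd.2]
    · simp [hd.2]
  · obtain ⟨⟨hi1, hin⟩, hie⟩ := hmem i hi
    obtain ⟨⟨hi1', hin'⟩, hie'⟩ := hmem i' hi'
    exact h.inj_right hi1 hin hi1' hin' hv (hie.trans hie'.symm)

lemma le_card (h : IsLegalTrail H n q v) :
    n ≤ ((insert none (H.verts.image some)) ×ˢ H.edges).card := by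
  rw [← Finset.card_range n]
  refine Finset.card_le_card_of_injOn (fun i ↦ (v i, q (i + 1))) (fun i hi ↦ ?_)
    fun i hi j hj hij ↦ ?_
  · rw [Finset.mem_coe, Finset.mem_range] at hi
    refine Finset.mem_product.2 ⟨?_, (h.dart i hi).mem⟩
    rw [Finset.mem_insert, Finset.mem_image]
    rcases hv : v i with _ | u
    · exact Or.inl hv
    · exact Or.inr ⟨u, (h.nonintegralAt_succ hi hv).mem_verts, hv.symm⟩
  · rw [Finset.mem_coe, Finset.mem_range] at hi hj
    exact h.inj i hi j hj (Prod.ext_iff.1 hij).1 (Prod.ext_iff.1 hij).2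

lemma shift {m k : ℕ} (h : IsLegalTrail H (m + k) q v) (hk : 0 < k) :
    IsLegalTrail H k (fun i ↦ q (m + i)) (fun i ↦ v (m + i)) where
  pos := hk
  dart i hi := h.dart (m + i) (by omega)
  legal i hi hik := h.legal (m + i) (by omega) (by omega)
  inj i hi j hj hv hq := Nat.add_left_cancel (h.inj (m + i) (by omega) (m + j) (by omega) hv hq)

lemma congr {q' : ℕ → Set Pt} {v' : ℕ → Option Pt} (h : IsLegalTrail H n q v)
    (hq : ∀ i ≤ n, q' i = q i) (hv : ∀ i ≤ n, v' i = v i) : IsLegalTrail H n q' v' where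
  pos := h.pos
  dart i hi := by
    rw [hv i hi.le, hq (i + 1) hi, hv (i + 1) hi]
    exact h.dart i hi
  legal i hi hin := by
    rw [hv i hin.le, hq i hin.le, hq (i + 1) hin]
    exact h.legal i hi hin
  inj i hi j hj := by
    rw [hv i hi.le, hv j hj.le, hq (i + 1) hi, hq (j + 1) hj]
    exact h.inj i hi j hj

lemma succ (h : IsLegalTrail H n q v) (hu : v n = some u) (hlegal : LegalPair H u (q n) (q (n + 1)))
    (hdart : IsDart H (v n) (q (n + 1)) (v (n + 1)))
    (hnew : ∀ i < n, v i = v n → q (i + 1) ≠ q (n + 1)) : IsLegalTrail H (n + 1) q v where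
  pos := n.succ_pos
  dart := Nat.forall_lt_succ_right.2 ⟨h.dart, hdart⟩
  legal i hi hin := by
    rcases Nat.lt_succ_iff_lt_or_eq.1 hin with hin | rfl
    · exact h.legal i hi hin
    · exact ⟨u, hu, hlegal⟩
  inj i hi j hj hv hq := by
    rcases Nat.lt_succ_iff_lt_or_eq.1 hi with hi | rfl <;>
      rcases Nat.lt_succ_iff_lt_or_eq.1 hj with hj | rfl
    · exact h.inj i hi j hj hv hq
    · exact absurd hq (hnew i hi hv)
    · exact absurd hq.symm (hnew j hj hv.symm)
    · rfl

end IsLegalTrail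

namespace IsTameTrail

variable {H : Honeycomb} {n : ℕ} {q : ℕ → Set Pt} {v : ℕ → Option Pt}

lemma shift {m k : ℕ} (h : IsTameTrail H (m + k) q v) (hk : 0 < k) :
    IsTameTrail H k (fun i ↦ q (m + i)) (fun i ↦ v (m + i)) where
  toIsLegalTrail := h.toIsLegalTrail.shift hk
  one_lt_w i j hi hij hjk := h.one_lt_w (m + i) (m + j) (by omega) (by omega) (by omega)
  turn_turn u i hi j hj hij :=
    h.turn_turn u (m + i) (add_mem_turns hi) (m + j) (add_mem_turns hj) (by omega)

lemma one_lt_w_of_card_eq_two (h : IsTameTrail H n q v) {e : Set Pt}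
    (he : ((Finset.Icc 1 n).filter fun i ↦ q i = e).card = 2) : 1 < H.w e := by
  obtain ⟨i, hi, j, hj, hij⟩ := Finset.one_lt_card.1 (he ▸ one_lt_two)
  wlog hlt : i < j generalizing i j
  · exact this j hj i hi hij.symm (by omega)
  simp only [Finset.mem_filter, Finset.mem_Icc] at hi hj
  exact hj.2 ▸ h.one_lt_w i j hi.1.1 hlt hj.1.2 (hi.2.trans hj.2.symm)

lemma card_turns_le (h : IsTameTrail H n q v) (u : Pt) :
    (turns n q v u).card ≤ min 2 (H.absDiv u) := by
  rcases (turns n q v u).eq_empty_or_nonempty with hempty | hne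
  · simp [hempty]
  set i := (turns n q v u).min' hne
  have hi : i ∈ turns n q v u := Finset.min'_mem _ hne
  have hturn : ∀ j ∈ (turns n q v u).erase i, q j = q (i + 1) ∧ 1 < H.absDiv u := fun j hj ↦ by
    have hj' := Finset.mem_of_mem_erase hj
    have hij := lt_of_le_of_ne (Finset.min'_le _ j hj') (Finset.ne_of_mem_erase hj).symm
    exact ⟨(h.turn_turn u i hi j hj' hij).1, (h.turn_turn u i hi j hj' hij).2.2⟩
  have hcard : ((turns n q v u).erase i).card ≤ 1 := by
    refine Finset.card_le_one.2 fun j hj k hk ↦ ?_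
    obtain ⟨⟨hj1, hjn⟩, hju, -⟩ := mem_turns.1 (Finset.mem_of_mem_erase hj)
    obtain ⟨⟨hk1, hkn⟩, hku, -⟩ := mem_turns.1 (Finset.mem_of_mem_erase hk)
    exact h.inj_right hj1 hjn.le hk1 hkn.le (hju.trans hku.symm)
      ((hturn j hj).1.trans (hturn k hk).1.symm)
  rw [← Finset.card_erase_add_one hi]
  rcases ((turns n q v u).erase i).eq_empty_or_nonempty with hempty | ⟨j, hj⟩
  · have := (h.dominating_of_mem_turns hi).1.absDiv_pos
    rw [hempty, Finset.card_empty]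
    omega
  · have := (hturn j hj).2
    omega

end IsTameTrail

/-! ### Greedy steps -/

/-- The route rule of the greedy construction, by which the trail `(v 0, q 1, …, q n, v n)` with
`v n = some u` may go on along `f`: pass straight through a dominating edge `q n` only after having
turned onto it at `u`, and turn at `u` only for the first time or to undo the earlier turn there,
the latter only if `|div_w(u)| > 1`. -/
structure IsGreedyStep (H : Honeycomb) (n : ℕ) (q : ℕ → Set Pt) (v : ℕ → Option Pt) (u : Pt)
    (f : Set Pt) : Prop where
  nonintegralAt : NonintegralAt H u f
  legalPair : LegalPair H u (q n) f
  straight : Dominating H u (q n) → OppositeAt u (q n) f → ∃ j ∈ turns n q v u, q (j + 1) = q n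
  turn : ¬OppositeAt u (q n) f → ∀ i ∈ turns n q v u, q n = q (i + 1) ∧ f = q i ∧ 1 < H.absDiv u

/-- A final piece of the trail, from an earlier visit `m` to its last vertex on, is a legal cycle
which satisfies the bound on the turns at that vertex. -/
def Closes (H : Honeycomb) (n : ℕ) (q : ℕ → Set Pt) (v : ℕ → Option Pt) : Prop :=
  ∃ m < n, ∃ u, v m = some u ∧ v n = some u ∧ LegalPair H u (q n) (q (m + 1)) ∧
    (OppositeAt u (q n) (q (m + 1)) ∨
      ((turns n q v u).filter (m < ·)).card + 1 ≤ min 2 (H.absDiv u))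

section GreedyStep

variable {H : Honeycomb} {n i : ℕ} {q : ℕ → Set Pt} {v : ℕ → Option Pt} {u : Pt} {f : Set Pt}

lemma IsGreedyStep.congr {q' : ℕ → Set Pt} {v' : ℕ → Option Pt} (hf : IsGreedyStep H n q v u f)
    (hq : ∀ i ≤ n, q' i = q i) (hv : ∀ i ≤ n, v' i = v i) : IsGreedyStep H n q' v' u f where
  nonintegralAt := hf.nonintegralAt
  legalPair := hq n le_rfl ▸ hf.legalPair
  straight hd hopp := by
    rw [hq n le_rfl] at hd hopp ⊢
    obtain ⟨j, hj, hjq⟩ := hf.straight hd hopp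
    exact ⟨j, by rwa [turns_congr hq hv], (hq (j + 1) (mem_turns.1 hj).1.2).trans hjq⟩
  turn hopp i hi := by
    rw [turns_congr hq hv] at hi
    rw [hq n le_rfl] at hopp ⊢
    have hin := (mem_turns.1 hi).1.2
    rw [hq i hin.le, hq (i + 1) hin]
    exact hf.turn hopp i hi

lemma IsGreedyStep.card_turns_add_one_le (h : IsLegalTrail H n q v)
    (hf : IsGreedyStep H n q v u f) (hopp : ¬OppositeAt u (q n) f) :
    (turns n q v u).card + 1 ≤ min 2 (H.absDiv u) := by
  have hcard : (turns n q v u).card ≤ 1 := by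
    refine Finset.card_le_one.2 fun i hi j hj ↦ ?_
    obtain ⟨⟨hi1, hin⟩, hiu, -⟩ := mem_turns.1 hi
    obtain ⟨⟨hj1, hjn⟩, hju, -⟩ := mem_turns.1 hj
    exact h.inj_right hi1 hin.le hj1 hjn.le (hiu.trans hju.symm)
      ((hf.turn hopp i hi).2.1.symm.trans (hf.turn hopp j hj).2.1)
  rcases (turns n q v u).eq_empty_or_nonempty with hempty | ⟨i, hi⟩
  · have := (hf.legalPair.dominating hopp).1.absDiv_pos
    rw [hempty, Finset.card_empty]
    omega
  · have := (hf.turn hopp i hi).2.2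
    omega

lemma IsGreedyStep.one_lt_w_of_oppositeAt (h : IsTameTrail H n q v) (hu : v n = some u)
    (hf : IsGreedyStep H n q v u (q i)) (hopp : OppositeAt u (q n) (q i)) (hi : 1 ≤ i)
    (hin : i < n) (hiu : v i = some u) : 1 < H.w (q i) := by
  have hqn := h.nonintegralAt h.pos le_rfl hu
  by_cases hd : Dominating H u (q i)
  · exact (Int.add_one_le_of_lt (H.w_pos _ hqn.mem)).trans_lt
      ((hf.nonintegralAt.dominating_iff_of_oppositeAt hqn hopp.symm).1 hd)
  -- At its earlier visit to `u` the trail went straight from `q i` onto `q n`, so that `q n` was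
  -- a repeated edge before `q i` became one.
  have hsucc : OppositeAt u (q i) (q (i + 1)) := by
    by_contra hno
    exact hd ((h.legalPair hi hin hiu).dominating hno).1
  have hq : q (i + 1) = q n :=
    hf.nonintegralAt.eq_of_oppositeAt (h.nonintegralAt_succ hin hiu) hqn hsucc hopp.symm
  have hne : i + 1 ≠ n := fun hn ↦ (h.dart i hin).ne (by rw [hn, hu, hiu])
  have hw : 1 < H.w (q n) := h.one_lt_w (i + 1) n (by omega) (by omega) le_rfl hq
  suffices ¬Dominating H u (q n) by
    rw [hqn.dominating_iff_of_oppositeAt hf.nonintegralAt hopp, not_lt] at this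
    exact hw.trans_le this
  intro hdn
  obtain ⟨j, hj, hjq⟩ := hf.straight hdn hopp
  obtain ⟨⟨-, hjn⟩, hju, hno⟩ := mem_turns.1 hj
  obtain rfl := h.inj i hin j hjn (hiu.trans hju.symm) (hq.trans hjq.symm)
  exact hno hsucc

lemma IsGreedyStep.one_lt_w_of_not_oppositeAt (h : IsLegalTrail H n q v)
    (hf : IsGreedyStep H n q v u (q i)) (hopp : ¬OppositeAt u (q n) (q i)) (hi : 1 ≤ i)
    (hin : i < n) (hiu : v i = some u) : 1 < H.w (q i) := by
  by_contra! hw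
  have hno : ∀ g, NonintegralAt H u g → ¬OppositeAt u (q i) g := fun g hg hig ↦ by
    have hlt := (hf.nonintegralAt.dominating_iff_of_oppositeAt hg hig).1
      (hf.legalPair.dominating hopp).2
    have := H.w_pos g hg.mem
    omega
  have hi_turn : i ∈ turns n q v u :=
    mem_turns.2 ⟨⟨hi, hin⟩, hiu, hno _ (h.nonintegralAt_succ hin hiu)⟩
  have := (hf.turn hopp i hi_turn).2.2
  have := hf.nonintegralAt.w_eq_absDiv hno
  omega

lemma IsGreedyStep.one_lt_w (h : IsTameTrail H n q v) (hu : v n = some u)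
    (hf : IsGreedyStep H n q v u (q i)) (hi : 1 ≤ i) (hin : i < n) (hiu : v i = some u) :
    1 < H.w (q i) := by
  by_cases hopp : OppositeAt u (q n) (q i)
  · exact hf.one_lt_w_of_oppositeAt h hu hopp hi hin hiu
  · exact hf.one_lt_w_of_not_oppositeAt h.toIsLegalTrail hopp hi hin hiu

end GreedyStep

section ExistsStep

variable {H : Honeycomb} {n : ℕ} {q : ℕ → Set Pt} {v : ℕ → Option Pt} {u : Pt}

lemma IsLegalTrail.exists_isGreedyStep_of_not_dominating (h : IsLegalTrail H n q v)
    (hu : v n = some u) (hd : ¬Dominating H u (q n)) : ∃ f, IsGreedyStep H n q v u f := by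
  have hqn := h.nonintegralAt h.pos le_rfl hu
  obtain ⟨f, hf, hopp⟩ := hqn.exists_oppositeAt hd
  exact ⟨f, hf, hqn.legalPair_of_oppositeAt hf hopp, fun hd' ↦ absurd hd' hd,
    fun hno ↦ absurd hopp hno⟩

lemma IsLegalTrail.exists_isGreedyStep_of_turns_eq_empty (h : IsLegalTrail H n q v)
    (hu : v n = some u) (hd : Dominating H u (q n)) (hempty : turns n q v u = ∅) :
    ∃ f, IsGreedyStep H n q v u f := by
  have hqn := h.nonintegralAt h.pos le_rfl hu
  obtain ⟨f, hf, hne, hdf⟩ := hqn.exists_ne_dominating hd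
  exact ⟨f, hf, hqn.legalPair_of_dominating hf hne hd hdf,
    fun _ hopp ↦ absurd hopp (hqn.not_oppositeAt hf hd hdf), fun _ i hi ↦ by simp [hempty] at hi⟩

lemma IsLegalTrail.closes_of_mem_turns {j : ℕ} (h : IsLegalTrail H n q v) (hu : v n = some u)
    (hd : Dominating H u (q n)) (hj : j ∈ turns n q v u) (hmax : ∀ i ∈ turns n q v u, i ≤ j)
    (hne : q n ≠ q (j + 1)) : Closes H n q v := by
  obtain ⟨⟨-, hjn⟩, hju, -⟩ := mem_turns.1 hj
  have hlegal := (h.nonintegralAt h.pos le_rfl hu).legalPair_of_dominating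
    (h.nonintegralAt_succ hjn hju) hne hd (h.dominating_of_mem_turns hj).2
  have hnone : (turns n q v u).filter (j < ·) = ∅ :=
    Finset.filter_eq_empty_iff.2 fun i hi ↦ (hmax i hi).not_gt
  have := hd.absDiv_pos
  refine ⟨j, hjn, u, hju, hu, hlegal, Or.inr ?_⟩
  rw [hnone, Finset.card_empty]
  omega

lemma IsTameTrail.exists_isGreedyStep_of_eq {j : ℕ} (h : IsTameTrail H n q v) (hu : v n = some u)
    (hd : Dominating H u (q n)) (hj : j ∈ turns n q v u) (hmax : ∀ i ∈ turns n q v u, i ≤ j)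
    (heq : q n = q (j + 1)) : ∃ f, IsGreedyStep H n q v u f := by
  have hqn := h.nonintegralAt h.pos le_rfl hu
  obtain ⟨⟨hj1, hjn⟩, hju, -⟩ := mem_turns.1 hj
  by_cases hstraight : ∃ f, NonintegralAt H u f ∧ OppositeAt u (q n) f
  · obtain ⟨f, hf, hopp⟩ := hstraight
    exact ⟨f, hf, hqn.legalPair_of_oppositeAt hf hopp, fun _ _ ↦ ⟨j, hj, heq.symm⟩,
      fun hno ↦ absurd hopp hno⟩
  push Not at hstraight
  have hqj := h.nonintegralAt hj1 hjn.le hju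
  have hne : q n ≠ q j := heq ▸ (h.legalPair hj1 hjn hju).1.symm
  have hdiv : 1 < H.absDiv u := by
    have hjn' : j + 1 ≠ n := fun hn ↦ (h.dart j hjn).ne (by rw [hn, hju, hu])
    have := h.one_lt_w (j + 1) n (by omega) (by omega) le_rfl heq.symm
    rw [hqn.w_eq_absDiv hstraight] at this
    exact_mod_cast this
  have huniq : ∀ i ∈ turns n q v u, i = j := fun i hi ↦ by
    obtain ⟨⟨hi1, hin⟩, hiu, -⟩ := mem_turns.1 hi
    by_contra hij
    have hback := (h.turn_turn u i hi j hj (lt_of_le_of_ne (hmax i hi) hij)).2.1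
    exact hin.ne (h.inj_right hi1 hin.le h.pos le_rfl (hiu.trans hu.symm)
      (hback.symm.trans heq.symm))
  exact ⟨q j, hqj, hqn.legalPair_of_dominating hqj hne hd (h.dominating_of_mem_turns hj).1,
    fun _ hopp ↦ absurd hopp (hstraight _ hqj), fun _ i hi ↦ by
      rw [huniq i hi]
      exact ⟨heq, rfl, hdiv⟩⟩

lemma IsTameTrail.closes_or_exists_isGreedyStep (h : IsTameTrail H n q v) (hu : v n = some u) :
    Closes H n q v ∨ ∃ f, IsGreedyStep H n q v u f := by
  by_cases hd : Dominating H u (q n)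
  swap
  · exact Or.inr (h.exists_isGreedyStep_of_not_dominating hu hd)
  rcases (turns n q v u).eq_empty_or_nonempty with hempty | hne
  · exact Or.inr (h.exists_isGreedyStep_of_turns_eq_empty hu hd hempty)
  have hj := Finset.max'_mem _ hne
  have hmax : ∀ i ∈ turns n q v u, i ≤ (turns n q v u).max' hne := Finset.le_max' _
  by_cases heq : q n = q ((turns n q v u).max' hne + 1)
  · exact Or.inr (h.exists_isGreedyStep_of_eq hu hd hj hmax heq)
  · exact Or.inl (h.closes_of_mem_turns hu hd hj hmax heq)

end ExistsStep

/-! ### Extending and closing trails -/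

section Extension

variable {H : Honeycomb} {n : ℕ} {q : ℕ → Set Pt} {v : ℕ → Option Pt} {u : Pt}

lemma IsTameTrail.congr {q' : ℕ → Set Pt} {v' : ℕ → Option Pt} (h : IsTameTrail H n q v)
    (hq : ∀ i ≤ n, q' i = q i) (hv : ∀ i ≤ n, v' i = v i) : IsTameTrail H n q' v' where
  toIsLegalTrail := h.toIsLegalTrail.congr hq hv
  one_lt_w i j hi hij hjn := by
    rw [hq i (by omega), hq j hjn]
    exact h.one_lt_w i j hi hij hjn
  turn_turn u i hi j hj hij := by
    rw [turns_congr hq hv] at hi hj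
    have hin := (mem_turns.1 hi).1.2
    have hjn := (mem_turns.1 hj).1.2
    rw [hq i hin.le, hq (i + 1) hin, hq j hjn.le, hq (j + 1) hjn]
    exact h.turn_turn u i hi j hj hij

lemma IsTameTrail.succ (h : IsTameTrail H n q v) (hu : v n = some u)
    (hf : IsGreedyStep H n q v u (q (n + 1))) (hdart : IsDart H (v n) (q (n + 1)) (v (n + 1)))
    (hnew : ∀ i < n, v i = v n → q (i + 1) ≠ q (n + 1)) : IsTameTrail H (n + 1) q v := by
  have hsucc := h.toIsLegalTrail.succ hu hf.legalPair hdart hnew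
  refine ⟨hsucc, fun i j hi hij hjn hq ↦ ?_, fun x i hi j hj hij ↦ ?_⟩
  · rcases Nat.lt_succ_iff_lt_or_eq.1 (Nat.lt_succ_of_le hjn) with hjn | rfl
    · exact h.one_lt_w i j hi hij (by omega) hq
    have hiu : v i = some u := (hsucc.eq_pred_of_eq hi hij le_rfl hq).trans hu
    have hin : i ≠ n := by
      rintro rfl
      exact hf.legalPair.1 hq
    rw [← hq] at hf ⊢
    exact hf.one_lt_w h hu hi (by omega) hiu
  · obtain ⟨⟨hi1, -⟩, hix, hino⟩ := mem_turns.1 hi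
    obtain ⟨⟨hj1, hjn⟩, hjx, hjno⟩ := mem_turns.1 hj
    have hi' : i ∈ turns n q v x := mem_turns.2 ⟨⟨hi1, by omega⟩, hix, hino⟩
    rcases Nat.lt_succ_iff_lt_or_eq.1 hjn with hjn | rfl
    · exact h.turn_turn x i hi' j (mem_turns.2 ⟨⟨hj1, hjn⟩, hjx, hjno⟩) hij
    obtain rfl : u = x := Option.some_injective _ (hu.symm.trans hjx)
    exact hf.turn hjno i hi'

lemma IsGreedyStep.closes {m : ℕ} (h : IsLegalTrail H n q v) (hu : v n = some u) (hm : m < n)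
    (hmu : v m = some u) (hf : IsGreedyStep H n q v u (q (m + 1))) : Closes H n q v := by
  refine ⟨m, hm, u, hmu, hu, hf.legalPair, or_iff_not_imp_left.2 fun hopp ↦ ?_⟩
  have := Finset.card_filter_le (turns n q v u) (m < ·)
  have := hf.card_turns_add_one_le h hopp
  omega

lemma IsTameTrail.exists_succ (h : IsTameTrail H n q v) (hu : v n = some u)
    (hclose : ¬Closes H n q v) : ∃ q' v', IsTameTrail H (n + 1) q' v' ∧ v' 0 = v 0 := by
  obtain ⟨f, hf⟩ := (h.closes_or_exists_isGreedyStep hu).resolve_left hclose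
  obtain ⟨b, hb⟩ := hf.nonintegralAt.exists_isDart
  have hq : ∀ i ≤ n, Function.update q (n + 1) f i = q i := fun i hi ↦
    Function.update_of_ne (by omega) _ _
  have hv : ∀ i ≤ n, Function.update v (n + 1) b i = v i := fun i hi ↦
    Function.update_of_ne (by omega) _ _
  refine ⟨Function.update q (n + 1) f, Function.update v (n + 1) b,
    (h.congr hq hv).succ (u := u) ?_ ?_ ?_ fun i hi hiu hqi ↦ ?_, hv 0 n.zero_le⟩
  · rw [hv n le_rfl, hu]
  · rw [Function.update_self]
    exact hf.congr hq hv
  · rw [hv n le_rfl, hu, Function.update_self, Function.update_self]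
    exact hb
  · rw [hv i hi.le, hv n le_rfl, hu] at hiu
    rw [hq (i + 1) hi, Function.update_self] at hqi
    subst hqi
    exact hclose (hf.closes h.toIsLegalTrail hu hi hiu)

end Extension

section Termination

variable {H : Honeycomb} {a b : Option Pt} {u : Pt} {e : Set Pt} {i : Fin 3}

lemma IsDart.isTameTrail_one (h : IsDart H a e b) :
    IsTameTrail H 1 (fun _ ↦ e) (fun i ↦ if i = 0 then a else b) := by
  have hturns : ∀ u, turns 1 (fun _ ↦ e) (fun i ↦ if i = 0 then a else b) u = ∅ := fun u ↦ rfl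
  refine ⟨⟨one_pos, fun i hi ↦ ?_, fun i hi hi' ↦ by omega, fun i hi j hj _ _ ↦ by omega⟩,
    fun i j hi hij hj _ ↦ by omega, fun u i hi ↦ by simp [hturns] at hi⟩
  obtain rfl : i = 0 := by omega
  exact h

lemma IsDart.exists_isTameTrail (h : IsDart H a e b) :
    ∃ n q v, IsTameTrail H n q v ∧ v 0 = a ∧ (Closes H n q v ∨ v n = none) := by
  by_contra! hnone
  have hlong : ∀ n, ∃ q v, IsTameTrail H (n + 1) q v ∧ v 0 = a := fun n ↦ by
    induction n with
    | zero => exact ⟨_, _, h.isTameTrail_one, rfl⟩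
    | succ n ih =>
      obtain ⟨q, v, hqv, hva⟩ := ih
      obtain ⟨hclose, hend⟩ := hnone _ q v hqv hva
      obtain ⟨u, hu⟩ := Option.ne_none_iff_exists'.1 hend
      obtain ⟨q', v', hqv', hv'⟩ := hqv.exists_succ hu hclose
      exact ⟨q', v', hqv', hv'.trans hva⟩
  obtain ⟨q, v, hqv, -⟩ := hlong ((insert none (H.verts.image some)) ×ˢ H.edges).card
  exact (Nat.lt_succ_self _).not_ge hqv.le_card

lemma exists_isTameTrail_closes_or_open (hu : u ∈ H.verts) (hi : ∀ z : ℤ, dcoord i u ≠ z) :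
    ∃ n q v, IsTameTrail H n q v ∧ (Closes H n q v ∨ v 0 = none ∧ v n = none) := by
  obtain ⟨e, he⟩ := exists_nonintegralAt hu hi
  obtain ⟨b, hb⟩ := he.exists_isDart
  obtain ⟨n, q, v, hqv, -, hclose | hend⟩ := hb.exists_isTameTrail
  · exact ⟨n, q, v, hqv, Or.inl hclose⟩
  obtain ⟨n', q', v', hqv', hstart, hrun⟩ := (hqv.dart_pred hqv.pos le_rfl).symm.exists_isTameTrail
  exact ⟨n', q', v', hqv', hrun.imp_right fun hend' ↦ ⟨hstart.trans hend, hend'⟩⟩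

end Termination

section Closing

variable {H : Honeycomb} {n : ℕ} {q : ℕ → Set Pt} {v : ℕ → Option Pt} {u : Pt} {i : Fin 3}

lemma IsLegalTrail.one_lt_of_eq (h : IsLegalTrail H n q v) (hv : v 0 = v n) : 1 < n := by
  refine Nat.lt_of_le_of_ne h.pos ?_
  rintro rfl
  exact (h.dart 0 one_pos).ne hv

lemma turnCount_true_le (hturns : ∀ x, (turns n q v x).card ≤ min 2 (H.absDiv x))
    (hu : v 0 = some u) (hclose : OppositeAt u (q n) (q 1) ∨
      (turns n q v u).card + 1 ≤ min 2 (H.absDiv u)) (x : Pt) :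
    turnCount n q v true x ≤ min 2 (H.absDiv x) := by
  by_cases hx : v 0 = some x ∧ ¬OppositeAt x (q n) (q 1)
  · obtain rfl : u = x := Option.some_injective _ (hu.symm.trans hx.1)
    rw [turnCount, if_pos ⟨rfl, hx⟩]
    exact hclose.resolve_left hx.2
  · rw [turnCount, if_neg fun hwrap ↦ hx hwrap.2]
    exact hturns x

lemma IsTameTrail.exists_cycle_of_closes (h : IsTameTrail H n q v) (hclose : Closes H n q v) :
    ∃ k q' v' u, IsTameTrail H k q' v' ∧ v' 0 = some u ∧ v' k = some u ∧
      LegalPair H u (q' k) (q' 1) ∧ ∀ x, turnCount k q' v' true x ≤ min 2 (H.absDiv x) := by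
  obtain ⟨m, hm, u, hmu, hnu, hlegal, hbend⟩ := hclose
  obtain ⟨k, rfl⟩ := Nat.exists_eq_add_of_le hm.le
  have hshift := h.shift (Nat.pos_of_lt_add_right hm)
  exact ⟨k, fun i ↦ q (m + i), fun i ↦ v (m + i), u, hshift, hmu, hnu, hlegal,
    turnCount_true_le hshift.card_turns_le hmu
      (hbend.imp_right ((Nat.succ_le_succ card_turns_add_le).trans ·))⟩

lemma exists_isTameTrail_open_or_cycle (hu : u ∈ H.verts) (hi : ∀ z : ℤ, dcoord i u ≠ z) :
    ∃ n q v wrap, IsTameTrail H n q v ∧ 1 < n ∧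
      ((wrap = false ∧ v 0 = none ∧ v n = none) ∨
        (wrap = true ∧ ∃ u, v 0 = some u ∧ v n = some u ∧ LegalPair H u (q n) (q 1))) ∧
      ∀ x, turnCount n q v wrap x ≤ min 2 (H.absDiv x) := by
  obtain ⟨n, q, v, h, hclose | ⟨h0, hn⟩⟩ := exists_isTameTrail_closes_or_open hu hi
  · obtain ⟨k, q', v', x, h', h0, hk, hlegal, hturns⟩ := h.exists_cycle_of_closes hclose
    exact ⟨k, q', v', true, h', h'.one_lt_of_eq (h0.trans hk.symm),
      Or.inr ⟨rfl, x, h0, hk, hlegal⟩, hturns⟩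
  · refine ⟨n, q, v, false, h, h.one_lt_of_eq (h0.trans hn.symm), Or.inl ⟨rfl, h0, hn⟩,
      fun x ↦ ?_⟩
    rw [turnCount, if_neg fun hwrap ↦ Bool.false_ne_true hwrap.1]
    exact h.card_turns_le x

end Closing

/-- Lemma 1.  If a honeycomb has a nonintegral vertex, then it has an
open legal path or a legal cycle P such that: (i) each edge occurs in P at most twice,
and when twice, P traverses it in both directions; (ii) an edge occurring twice has
weight > 1; (iii) at each vertex u, P turns at most min{2, |div_w(u)|} times. -/
theorem stmt5 (H : Honeycomb)
    (hni : ∃ v ∈ H.verts, ∃ i : Fin 3, ∀ z : ℤ, dcoord i v ≠ (z : ℝ)) :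
    ∃ (k : ℕ) (q : ℕ → Set Pt) (v : ℕ → Option Pt) (wrap : Bool),
      IsLegalPath H k q v ∧
      ((wrap = false ∧ 1 < k ∧ v 0 = none ∧ v k = none) ∨
        (wrap = true ∧ ∃ u : Pt, v 0 = some u ∧ v k = some u ∧
          LegalPair H u (q k) (q 1))) ∧
      (∀ e ∈ H.edges, ((Finset.Icc 1 k).filter fun i => q i = e).card ≤ 2) ∧
      (∀ i j : ℕ, 1 ≤ i → i < j → j ≤ k → q i = q j → v i = v (j - 1)) ∧
      (∀ e ∈ H.edges, ((Finset.Icc 1 k).filter fun i => q i = e).card = 2 → 1 < H.w e) ∧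
      (∀ u ∈ H.verts, turnCount k q v wrap u ≤ min 2 (divw H.edges H.w u).natAbs) := by
  obtain ⟨u, hu, i, hi⟩ := hni
  obtain ⟨n, q, v, wrap, h, hn, hends, hturns⟩ := exists_isTameTrail_open_or_cycle hu hi
  have hpath : IsLegalPath H n q v := h.isLegalPath hn
  exact ⟨n, q, v, wrap, hpath,
    hends.imp_left fun ⟨hwrap, h0, hk⟩ ↦ ⟨hwrap, hn, h0, hk⟩,
    fun e _ ↦ h.card_filter_eq_le_two e,
    fun i j hi hij hjn hq ↦ h.eq_pred_of_eq hi hij hjn hq,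
    fun e _ he ↦ h.one_lt_w_of_card_eq_two he, fun x _ ↦ hturns x⟩
end
end

section
/- Let G be a convex triangular grid, F ⊆ E(G), h₀ : F → ℝ, and h ∈ C(G,h₀). Then h is a vertex (extreme point) of C(G,h₀) if and only if h is uniquely determined by its tiling, i.e., every h' ∈ C(G,h₀) with τ_{h'} = τ_h satisfies h' = h. -/
open scoped BigOperators

attribute [local instance] Classical.propDecidable

noncomputable section

/-- Directed edges: ordered pairs of points. -/
abbrev Ed : Type := Pt × Pt

/-- A little (lattice) triangle of the triangular grid, given by its base point and
its orientation (`up = true` for an upward triangle). -/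
structure GridTriangle : Type where
  base : Pt
  up : Bool

noncomputable def GridTriangle.v0 (T : GridTriangle) : Pt := T.base
noncomputable def GridTriangle.v1 (T : GridTriangle) : Pt := T.base + xiv 0
noncomputable def GridTriangle.v2 (T : GridTriangle) : Pt :=
  if T.up then T.base + xiv 0 + xiv 1 else T.base + xiv 0 + xiv 2

/-- The three directed edges of the 3-circuit surrounding a little triangle;
each has direction ξ₁, ξ₂ or ξ₃. -/
noncomputable def GridTriangle.e0 (T : GridTriangle) : Ed := (T.v0, T.v1)
noncomputable def GridTriangle.e1 (T : GridTriangle) : Ed := (T.v1, T.v2)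
noncomputable def GridTriangle.e2 (T : GridTriangle) : Ed := (T.v2, T.v0)

noncomputable def GridTriangle.edgeFinset (T : GridTriangle) : Finset Ed := {T.e0, T.e1, T.e2}

/-- The closed region spanned by a little triangle. -/
noncomputable def GridTriangle.region (T : GridTriangle) : Set Pt :=
  convexHull ℝ {T.v0, T.v1, T.v2}

/-- Vectors of the lattice generated by ξ₁ and ξ₂. -/
def IsLatticeVec (p : Pt) : Prop := ∃ m n : ℤ, p = (m : ℝ) • xiv 0 + (n : ℝ) • xiv 1

/-- A convex triangular grid: a finite nonempty set of little triangles of a common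
translate of the triangular lattice whose union is a convex polygon.  (Its vertices,
edges, bounded faces and boundary are then those of the planar digraph formed by the
edges of the little triangles.) -/
structure ConvexGrid : Type where
  tris : Finset GridTriangle
  nonempty : tris.Nonempty
  aligned : ∀ T ∈ tris, ∀ T' ∈ tris, IsLatticeVec (T.base - T'.base)
  convex : Convex ℝ (⋃ T ∈ tris, GridTriangle.region T)

/-- The region R(G) spanned by the grid. -/
noncomputable def ConvexGrid.region (G : ConvexGrid) : Set Pt :=
  ⋃ T ∈ G.tris, GridTriangle.region T

/-- The (directed) edge set E(G) of the grid. -/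
noncomputable def ConvexGrid.edges (G : ConvexGrid) : Finset Ed :=
  G.tris.biUnion GridTriangle.edgeFinset

/-- The boundary edges B(G): edges lying in exactly one little triangle. -/
noncomputable def ConvexGrid.boundary (G : ConvexGrid) : Finset Ed :=
  G.edges.filter fun e => (G.tris.filter fun T => e ∈ T.edgeFinset).card = 1

/-- A cocirculation: `h(e)+h(e')+h(e'')=0` around each little triangle. -/
def IsCocirculation (G : ConvexGrid) (h : Ed → ℝ) : Prop :=
  ∀ T ∈ G.tris, h T.e0 + h T.e1 + h T.e2 = 0

/-- `g` coincides with an affine function on `S`. -/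
def AffineOn (g : Pt → ℝ) (S : Set Pt) : Prop :=
  ∃ φ : Pt →ᵃ[ℝ] ℝ, ∀ x ∈ S, g x = φ x

/-- A concave cocirculation: a cocirculation induced by a concave function on R(G)
which is affinely linear within each little triangle. -/
def IsConcaveCocirculation (G : ConvexGrid) (h : Ed → ℝ) : Prop :=
  IsCocirculation G h ∧
  ∃ g : Pt → ℝ, ConcaveOn ℝ G.region g ∧ (∀ T ∈ G.tris, AffineOn g T.region) ∧
    ∀ e ∈ G.edges, h e = g e.2 - g e.1

/-- The polyhedron C(G,h₀) of concave cocirculations agreeing with h₀ on F. -/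
def CC (G : ConvexGrid) (F : Set Ed) (h₀ : Ed → ℝ) : Set (Ed → ℝ) :=
  {h | IsConcaveCocirculation G h ∧ ∀ e ∈ F, h e = h₀ e}

/-- `h` is a vertex (extreme point) of the set `C` of cocirculations, regarded as a
subset of ℝ^{E(G)} (only the coordinates on the edges of `G` matter). -/
def IsVertexOf (G : ConvexGrid) (C : Set (Ed → ℝ)) (h : Ed → ℝ) : Prop :=
  h ∈ C ∧ ∀ h₁ ∈ C, ∀ h₂ ∈ C,
    (∀ e ∈ G.edges, h e = (h₁ e + h₂ e) / 2) → ∀ e ∈ G.edges, h₁ e = h₂ e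

/-- Two concave cocirculations have the same tiling iff they make exactly the same
little rhombi flat (i.e. satisfy the rhombus inequality with equality): the tiles of
τ_h are the unions of the equivalence classes of little triangles under the relation
generated by flat rhombi, so this coincides with τ_{h'} = τ_h. -/
def SameTiling (G : ConvexGrid) (h h' : Ed → ℝ) : Prop :=
  ∀ T ∈ G.tris, ∀ T' ∈ G.tris, T ≠ T' → (T.edgeFinset ∩ T'.edgeFinset).Nonempty →
    ((∀ e ∈ T.edgeFinset, ∀ e' ∈ T'.edgeFinset,
        e ≠ e' → e.2 - e.1 = e'.2 - e'.1 → h e = h e') ↔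
      (∀ e ∈ T.edgeFinset, ∀ e' ∈ T'.edgeFinset,
        e ≠ e' → e.2 - e.1 = e'.2 - e'.1 → h' e = h' e'))

/-!
A function on `R(G)` that is affine on each little triangle is concave iff it is concave across
each edge shared by two little triangles. So, among the functions on `E(G)` that come from such
potentials, the concave cocirculations are cut out by finitely many linear inequalities, one for
each little rhombus, and the tiling of `h` records which of them `h` satisfies with equality.

A point `h` of such a polyhedron is a vertex iff no other point has the same tight inequalities.
If `h'` has the same ones, the line through `h` and `h'` stays in the polyhedron a little beyond
`h`, so `h` is not a vertex unless `h' = h`. If `h` is the midpoint of a segment in the polyhedron,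
all inner points of the segment have the same tight inequalities as `h`.
-/

open scoped Topology

lemma exists_pos_mul_abs_le {ι 𝕜 : Type*} [Field 𝕜] [LinearOrder 𝕜] [IsStrictOrderedRing 𝕜]
    (s : Finset ι) {a b : ι → 𝕜} (ha : ∀ i ∈ s, 0 ≤ a i) (hab : ∀ i ∈ s, a i = 0 → b i = 0) :
    ∃ ε > 0, ∀ i ∈ s, ε * |b i| ≤ a i := by
  induction s using Finset.induction_on with
  | empty => exact ⟨1, one_pos, by simp⟩
  | insert i s _ ih =>
    rw [Finset.forall_mem_insert] at ha hab
    obtain ⟨ε, hε, hs⟩ := ih ha.2 hab.2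
    obtain ⟨δ, hδ, hi⟩ : ∃ δ > 0, δ * |b i| ≤ a i := by
      rcases ha.1.eq_or_lt with h | h
      · exact ⟨1, one_pos, by simp [hab.1 h.symm, ← h]⟩
      · refine ⟨a i / (|b i| + 1), by positivity, ?_⟩
        rw [div_mul_eq_mul_div, div_le_iff₀ (by positivity)]
        gcongr
        exact le_add_of_nonneg_right zero_le_one
    refine ⟨min ε δ, lt_min hε hδ, Finset.forall_mem_insert _ _ _ |>.2 ⟨?_, fun j hj => ?_⟩⟩
    · exact le_trans (by gcongr; exact min_le_right _ _) hi
    · exact le_trans (by gcongr; exact min_le_left _ _) (hs j hj)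

lemma concaveOn_of_forall_exists_affineMap {𝕜 E : Type*} [Field 𝕜] [LinearOrder 𝕜]
    [IsStrictOrderedRing 𝕜] [AddCommGroup E] [Module 𝕜 E] {s : Set E} {f : E → 𝕜}
    (hs : Convex 𝕜 s) (h : ∀ x ∈ s, ∃ φ : E →ᵃ[𝕜] 𝕜, φ x = f x ∧ ∀ y ∈ s, f y ≤ φ y) :
    ConcaveOn 𝕜 s f := by
  refine ⟨hs, fun x hx y hy a b ha hb hab => ?_⟩
  obtain ⟨φ, hφ, hle⟩ := h _ (hs hx hy ha hb hab)
  rw [← hφ, Convex.combo_affine_apply hab]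
  have hx := hle x hx
  have hy := hle y hy
  gcongr

lemma le_affineMap_of_concaveOn_of_eventuallyEq {E : Type*} [AddCommGroup E] [Module ℝ E]
    [TopologicalSpace E] [IsTopologicalAddGroup E] [ContinuousSMul ℝ E] {s : Set E} {f : E → ℝ}
    (hf : ConcaveOn ℝ s f) {φ : E →ᵃ[ℝ] ℝ} {a : E} (ha : a ∈ s) (hφ : f =ᶠ[𝓝[s] a] φ)
    {x : E} (hx : x ∈ s) : f x ≤ φ x := by
  have hconc : ConcaveOn ℝ s (f - ⇑φ) :=
    hf.sub ((convexOn_id convex_univ).comp_affineMap φ |>.subset (Set.subset_univ s) hf.1)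
  have hmax : IsLocalMaxOn (f - ⇑φ) s a := by
    filter_upwards [hφ] with y hy
    simp [hy, hφ.self_of_nhdsWithin ha]
  have := IsMaxOn.of_isLocalMaxOn_of_concaveOn ha hmax hconc hx
  simpa [hφ.self_of_nhdsWithin ha] using this

lemma coord_lt_one_of_forall_pos {ι 𝕜 V P : Type*} [Finite ι] [Nontrivial ι] [Field 𝕜]
    [LinearOrder 𝕜] [IsStrictOrderedRing 𝕜] [AddCommGroup V] [Module 𝕜 V] [AddTorsor V P]
    (b : AffineBasis ι 𝕜 P) {x : P} (hx : ∀ i, 0 < b.coord i x) (i : ι) : b.coord i x < 1 := by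
  cases nonempty_fintype ι
  obtain ⟨j, hj⟩ := exists_ne i
  rw [← b.sum_coord_apply_eq_one x]
  exact Finset.single_lt_sum hj (Finset.mem_univ i) (Finset.mem_univ j) (hx j)
    fun k _ _ => (hx k).le

lemma coord_le_one_of_forall_nonneg {ι 𝕜 V P : Type*} [Finite ι] [Field 𝕜]
    [LinearOrder 𝕜] [IsStrictOrderedRing 𝕜] [AddCommGroup V] [Module 𝕜 V] [AddTorsor V P]
    (b : AffineBasis ι 𝕜 P) {x : P} (hx : ∀ i, 0 ≤ b.coord i x) (i : ι) : b.coord i x ≤ 1 := by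
  cases nonempty_fintype ι
  rw [← b.sum_coord_apply_eq_one x]
  exact Finset.single_le_sum (f := (b.coord · x)) (fun j _ => hx j) (Finset.mem_univ i)

lemma eq_or_eq_add_one_or_eq_add_two (k j : Fin 3) : j = k ∨ j = k + 1 ∨ j = k + 2 := by
  decide +revert

lemma sum_fin_three_eq {M : Type*} [AddCommMonoid M] (f : Fin 3 → M) (k : Fin 3) :
    ∑ j, f j = f k + f (k + 1) + f (k + 2) := by
  rw [← Equiv.sum_comp (Equiv.addLeft k), Fin.sum_univ_three]
  simp

/-- The height above the line `ℝ ξ_k`, in units of the height of a little triangle: the linear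
functional with values `0`, `1`, `-1` at `ξ_k`, `ξ_{k+1}`, `ξ_{k+2}`. -/
def height (k : Fin 3) : Pt →ₗ[ℝ] ℝ :=
  (2 / √3) • ((xiv k).1 • LinearMap.snd ℝ ℝ ℝ - (xiv k).2 • LinearMap.fst ℝ ℝ ℝ)

lemma height_xiv (k j : Fin 3) :
    height k (xiv j) = if j = k then 0 else if j = k + 1 then 1 else -1 := by
  fin_cases k <;> fin_cases j <;> simp [height, xiv] <;> field_simp <;> norm_num

lemma eq_zero_of_height_eq_zero {x : Pt} (hx : ∀ k, height k x = 0) : x = 0 := by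
  have h₂ : x.2 = 0 := by simpa [height, xiv] using hx 0
  have h₁ : x.1 = 0 := by simpa [height, xiv, h₂] using hx 1
  exact Prod.ext h₁ h₂

lemma xiv_injective : Function.Injective xiv := fun i j hij => by
  have hk (k : Fin 3) := congrArg (height k) hij
  simp only [height_xiv] at hk
  revert hk
  fin_cases i <;> fin_cases j <;> simp [Fin.forall_fin_succ]

lemma xiv_two : xiv 2 = -xiv 0 - xiv 1 := by
  ext <;> simp [xiv]; norm_num

namespace IsLatticeVec

lemma add {x y : Pt} : IsLatticeVec x → IsLatticeVec y → IsLatticeVec (x + y) := by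
  rintro ⟨m, n, rfl⟩ ⟨m', n', rfl⟩
  exact ⟨m + m', n + n', by push_cast; module⟩

lemma neg {x : Pt} : IsLatticeVec x → IsLatticeVec (-x) := by
  rintro ⟨m, n, rfl⟩
  exact ⟨-m, -n, by push_cast; module⟩

lemma sub {x y : Pt} (hx : IsLatticeVec x) (hy : IsLatticeVec y) : IsLatticeVec (x - y) :=
  sub_eq_add_neg x y ▸ hx.add hy.neg

lemma exists_height_eq {x : Pt} (hx : IsLatticeVec x) (k : Fin 3) :
    ∃ n : ℤ, height k x = n := by
  obtain ⟨m, n, rfl⟩ := hx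
  have hk (j : Fin 3) : ∃ n : ℤ, height k (xiv j) = n := by
    rw [height_xiv]
    split_ifs
    exacts [⟨0, by simp⟩, ⟨1, by simp⟩, ⟨-1, by simp⟩]
  obtain ⟨a, ha⟩ := hk 0
  obtain ⟨b, hb⟩ := hk 1
  exact ⟨m * a + n * b, by simp [ha, hb]⟩

end IsLatticeVec

lemma isLatticeVec_xiv (k : Fin 3) : IsLatticeVec (xiv k) := by
  fin_cases k
  exacts [⟨1, 0, by simp⟩, ⟨0, 1, by simp⟩, ⟨-1, -1, by simp [xiv_two]; module⟩]

namespace GridTriangle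

variable (T : GridTriangle) (k : Fin 3)

/-- The corner of a little triangle opposite to its edge of direction `ξ_k`. -/
def vertex (k : Fin 3) : Pt :=
  if T.up then ![T.v2, T.v0, T.v1] k else ![T.v2, T.v1, T.v0] k

/-- The edge of a little triangle of direction `ξ_k`. -/
def edge (k : Fin 3) : Ed :=
  if T.up then (T.vertex (k + 1), T.vertex (k + 2)) else (T.vertex (k + 2), T.vertex (k + 1))

/-- The orientation of a little triangle: `1` for an upward and `-1` for a downward one. -/
def sign : ℝ := if T.up then 1 else -1

lemma sign_mul_sign : T.sign * T.sign = 1 := by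
  unfold sign; split_ifs <;> norm_num

lemma vertex_sub_vertex : T.vertex (k + 2) - T.vertex (k + 1) = T.sign • xiv k := by
  obtain ⟨b, _ | _⟩ := T <;> fin_cases k <;> simp [vertex, sign, v0, v1, v2, xiv_two] <;> abel

lemma edge_snd_sub_fst : (T.edge k).2 - (T.edge k).1 = xiv k := by
  have h := T.vertex_sub_vertex k
  unfold sign edge at *
  split_ifs at * <;> simp_all [← neg_sub (T.vertex (k + 2))]

lemma mem_edgeFinset {e : Ed} : e ∈ T.edgeFinset ↔ ∃ k, e = T.edge k := by
  obtain ⟨b, _ | _⟩ := T <;>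
    simp [edgeFinset, edge, vertex, e0, e1, e2, Fin.exists_fin_succ]; tauto

lemma edge_mem_edgeFinset : T.edge k ∈ T.edgeFinset :=
  T.mem_edgeFinset.2 ⟨k, rfl⟩

lemma isLatticeVec_vertex_sub_base : IsLatticeVec (T.vertex k - T.base) := by
  have h₀ : IsLatticeVec 0 := ⟨0, 0, by simp⟩
  obtain ⟨b, _ | _⟩ := T <;> fin_cases k <;>
    simp [vertex, v0, v1, v2, add_assoc, h₀, isLatticeVec_xiv, IsLatticeVec.add]

lemma vertex_sub_base_of_up_eq {T T' : GridTriangle} (h : T.up = T'.up) (k : Fin 3) :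
    T.vertex k - T.base = T'.vertex k - T'.base := by
  obtain ⟨b, u⟩ := T
  obtain ⟨b', u'⟩ := T'
  obtain rfl : u = u' := h
  cases u <;> fin_cases k <;> simp [vertex, v0, v1, v2, add_assoc]

lemma sign_mul_height_vertex (i j : Fin 3) :
    T.sign * height i (T.vertex j - T.vertex (i + 1)) = if i = j then 1 else 0 := by
  obtain ⟨b, _ | _⟩ := T <;> fin_cases i <;> fin_cases j <;>
    simp [vertex, sign, v0, v1, v2, height_xiv]

lemma affineIndependent_vertex : AffineIndependent ℝ T.vertex := by
  rw [affineIndependent_iff]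
  intro s w hw hp i hi
  calc w i = ∑ j ∈ s, w j * (T.sign * height i (T.vertex j - T.vertex (i + 1))) := by
        simp only [sign_mul_height_vertex, mul_ite, mul_one, mul_zero, Finset.sum_ite_eq, if_pos hi]
    _ = T.sign * (height i (∑ j ∈ s, w j • T.vertex j)
          - (∑ j ∈ s, w j) * height i (T.vertex (i + 1))) := by
        simp only [map_sub, map_sum, map_smul, smul_eq_mul, Finset.sum_mul,
          ← Finset.sum_sub_distrib, Finset.mul_sum]
        exact Finset.sum_congr rfl fun j _ => by ring
    _ = 0 := by simp [hw, hp]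

/-- The corners of a little triangle as an affine basis of the plane; its coordinates are the
barycentric coordinates of the triangle. -/
def basis : AffineBasis (Fin 3) ℝ Pt where
  toFun := T.vertex
  ind' := T.affineIndependent_vertex
  tot' := by
    rw [T.affineIndependent_vertex.affineSpan_eq_top_iff_card_eq_finrank_add_one]
    simp

lemma basis_apply : T.basis k = T.vertex k := rfl

lemma region_eq_convexHull_range : T.region = convexHull ℝ (Set.range T.basis) := by
  have : Set.range T.vertex = {T.v0, T.v1, T.v2} := by
    obtain ⟨b, _ | _⟩ := T <;> ext x <;>
      simp [vertex, Fin.exists_fin_succ, eq_comm (b := x)] <;> tauto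
  rw [region, ← this]
  rfl

lemma mem_region_iff {x : Pt} : x ∈ T.region ↔ ∀ k, 0 ≤ T.basis.coord k x := by
  rw [region_eq_convexHull_range, AffineBasis.convexHull_eq_nonneg_coord, Set.mem_ofPred_eq]

lemma mem_interior_region_iff {x : Pt} :
    x ∈ interior T.region ↔ ∀ k, 0 < T.basis.coord k x := by
  rw [region_eq_convexHull_range, AffineBasis.interior_convexHull, Set.mem_ofPred_eq]

lemma vertex_mem_region : T.vertex k ∈ T.region := by
  rw [region_eq_convexHull_range]
  exact subset_convexHull ℝ _ ⟨k, rfl⟩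

lemma edge_fst_mem_region : (T.edge k).1 ∈ T.region := by
  unfold edge; split_ifs <;> exact T.vertex_mem_region _

lemma edge_snd_mem_region : (T.edge k).2 ∈ T.region := by
  unfold edge; split_ifs <;> exact T.vertex_mem_region _

lemma coord_eq_sign_mul_height (x : Pt) :
    T.basis.coord k x = T.sign * height k (x - T.vertex (k + 1)) := by
  have : T.basis.coord k
      = (T.sign • height k).toAffineMap
        - AffineMap.const ℝ Pt (T.sign * height k (T.vertex (k + 1))) := by
    refine AffineMap.ext_on T.basis.tot ?_
    rintro _ ⟨j, rfl⟩
    rw [AffineBasis.coord_apply, ← T.sign_mul_height_vertex]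
    simp [basis_apply, mul_sub]
  rw [this]
  simp [mul_sub]

/-- The little triangle on the other side of the edge of direction `ξ_k`. It is the reflection of
`T` through the midpoint of that edge; the reflection of `T.v1` is its base. -/
def adjacent (k : Fin 3) : GridTriangle :=
  ⟨T.vertex (k + 1) + T.vertex (k + 2) - T.v1, !T.up⟩

lemma vertex_adjacent (j : Fin 3) :
    (T.adjacent k).vertex j = T.vertex (k + 1) + T.vertex (k + 2) - T.vertex j := by
  obtain ⟨b, _ | _⟩ := T <;> fin_cases j <;>
    simp [adjacent, vertex, v0, v1, v2, xiv_two] <;> abel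

lemma vertex_adjacent_add_one : (T.adjacent k).vertex (k + 1) = T.vertex (k + 2) := by
  rw [vertex_adjacent, add_sub_cancel_left]

lemma vertex_adjacent_add_two : (T.adjacent k).vertex (k + 2) = T.vertex (k + 1) := by
  rw [vertex_adjacent, add_sub_cancel_right]

lemma edge_adjacent : (T.adjacent k).edge k = T.edge k := by
  simp only [edge, vertex_adjacent_add_one, vertex_adjacent_add_two]
  obtain ⟨b, _ | _⟩ := T <;> simp [adjacent]

lemma sign_adjacent : (T.adjacent k).sign = -T.sign := by
  obtain ⟨b, _ | _⟩ := T <;> simp [adjacent, sign]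

lemma ne_adjacent : T ≠ T.adjacent k := fun h => by
  simpa [adjacent] using congrArg up h

lemma isLatticeVec_adjacent_base_sub_base : IsLatticeVec ((T.adjacent k).base - T.base) := by
  have h := ((T.isLatticeVec_vertex_sub_base (k + 1)).add
    (T.isLatticeVec_vertex_sub_base (k + 2))).sub (isLatticeVec_xiv 0)
  convert h using 1
  simp only [adjacent, v1]
  abel

lemma coord_adjacent (j : Fin 3) (x : Pt) :
    (T.adjacent k).basis.coord j x = (if j = k then 0 else 1) - T.basis.coord j x := by
  have hk : T.basis.coord j (T.vertex (k + 1)) + T.basis.coord j (T.vertex (k + 2))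
      = if j = k then 0 else 1 := by
    simp only [← basis_apply, AffineBasis.coord_apply]
    fin_cases k <;> fin_cases j <;> simp
  rw [← hk]
  simp only [coord_eq_sign_mul_height, sign_adjacent, vertex_adjacent, map_sub, map_add]
  ring

end GridTriangle

namespace GridTriangle

variable {T T' : GridTriangle} {x : Pt}

lemma up_adjacent_eq_iff (k : Fin 3) : (T.adjacent k).up = T'.up ↔ T.up ≠ T'.up := by
  simp [adjacent, Bool.eq_not, eq_comm]

lemma exists_sign_mul_height_eq {y : Pt} (hy : IsLatticeVec y) (k : Fin 3) :
    ∃ n : ℤ, T.sign * height k y = n := by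
  obtain ⟨n, hn⟩ := hy.exists_height_eq k
  unfold sign
  split_ifs
  exacts [⟨n, by simp [hn]⟩, ⟨-n, by simp [hn]⟩]

lemma eq_of_up_eq_of_mem_interior (hup : T.up = T'.up) (hbase : IsLatticeVec (T.base - T'.base))
    (hx : x ∈ interior T.region) (hx' : x ∈ T'.region) : T = T' := by
  rw [mem_interior_region_iff] at hx
  rw [mem_region_iff] at hx'
  have hdiff (k : Fin 3) :
      T'.basis.coord k x - T.basis.coord k x = T.sign * height k (T.base - T'.base) := by
    have hsign : T'.sign = T.sign := by rw [sign, sign, hup]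
    have hvertex := congrArg (height k) (vertex_sub_base_of_up_eq hup (k + 1))
    simp only [map_sub] at hvertex
    simp only [coord_eq_sign_mul_height, hsign, map_sub]
    linear_combination T.sign * hvertex
  have hzero (k : Fin 3) : T.sign * height k (T.base - T'.base) = 0 := by
    obtain ⟨n, hn⟩ := T.exists_sign_mul_height_eq hbase k
    have h₁ : (-1 : ℝ) < n := by
      linarith [hdiff k, hx' k, coord_lt_one_of_forall_pos _ hx k]
    have h₂ : (n : ℝ) < 1 := by
      linarith [hdiff k, hx k, coord_le_one_of_forall_nonneg _ hx' k]
    norm_cast at h₁ h₂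
    obtain rfl : n = 0 := by omega
    simpa using hn
  have hbase_eq : T.base - T'.base = 0 := eq_zero_of_height_eq_zero fun k => by
    linear_combination T.sign * hzero k - height k (T.base - T'.base) * T.sign_mul_sign
  obtain ⟨b, u⟩ := T
  obtain ⟨b', u'⟩ := T'
  exact congrArg₂ GridTriangle.mk (sub_eq_zero.1 hbase_eq) hup

/-- For oppositely oriented triangles the coordinate sums `c_k + c'_k` would be integers in
`(0, 2)`, hence all equal to `1`, while their total is `2`. -/
lemma up_eq_of_mem_interior (hbase : IsLatticeVec (T.base - T'.base))
    (hx : x ∈ interior T.region) (hx' : x ∈ T'.region) : T.up = T'.up := by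
  rw [mem_interior_region_iff] at hx
  rw [mem_region_iff] at hx'
  by_contra hup
  have hsum (k : Fin 3) : T.basis.coord k x + T'.basis.coord k x
      = T.sign * height k (T'.vertex (k + 1) - T.vertex (k + 1)) := by
    have hsign : T'.sign = -T.sign := by
      rw [← sign_adjacent T 0, sign, sign, (up_adjacent_eq_iff 0).2 hup]
    simp only [coord_eq_sign_mul_height, hsign, map_sub]
    ring
  have hone (k : Fin 3) : T.basis.coord k x + T'.basis.coord k x = 1 := by
    have hlattice : IsLatticeVec (T'.vertex (k + 1) - T.vertex (k + 1)) := by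
      convert ((T'.isLatticeVec_vertex_sub_base (k + 1)).sub
        (T.isLatticeVec_vertex_sub_base (k + 1))).sub hbase using 1
      abel
    obtain ⟨n, hn⟩ := T.exists_sign_mul_height_eq hlattice k
    have h₁ : (0 : ℝ) < n := by linarith [hsum k, hx k, hx' k]
    have h₂ : (n : ℝ) < 2 := by
      linarith [hsum k, coord_lt_one_of_forall_pos _ hx k, coord_le_one_of_forall_nonneg _ hx' k]
    norm_cast at h₁ h₂
    obtain rfl : n = 1 := by omega
    rw [hsum, hn, Int.cast_one]
  have htotal : ∑ k, (T.basis.coord k x + T'.basis.coord k x) = 2 := by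
    rw [Finset.sum_add_distrib, AffineBasis.sum_coord_apply_eq_one,
      AffineBasis.sum_coord_apply_eq_one, one_add_one_eq_two]
  simp [hone] at htotal

lemma eq_of_mem_interior (hbase : IsLatticeVec (T.base - T'.base))
    (hx : x ∈ interior T.region) (hx' : x ∈ T'.region) : T = T' :=
  eq_of_up_eq_of_mem_interior (up_eq_of_mem_interior hbase hx hx') hbase hx hx'

lemma eq_of_up_eq_of_edge_eq (hup : T.up = T'.up) {k : Fin 3} (hk : T.edge k = T'.edge k) :
    T = T' := by
  have hvertex : T.vertex (k + 1) = T'.vertex (k + 1) := by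
    simp only [edge, hup] at hk
    split_ifs at hk <;> simp_all
  have hbase := vertex_sub_base_of_up_eq hup (k + 1)
  rw [hvertex, sub_right_inj] at hbase
  obtain ⟨b, u⟩ := T
  obtain ⟨b', u'⟩ := T'
  exact congrArg₂ GridTriangle.mk hbase hup

lemma inter_edgeFinset_nonempty_iff (hne : T ≠ T') :
    (T.edgeFinset ∩ T'.edgeFinset).Nonempty ↔ ∃ k, T' = T.adjacent k := by
  constructor
  · rintro ⟨e, he⟩
    obtain ⟨⟨k, hk⟩, k', hk'⟩ := (Finset.mem_inter.1 he).imp (T.mem_edgeFinset.1 ·)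
      (T'.mem_edgeFinset.1 ·)
    obtain rfl : k = k' := xiv_injective <| by
      rw [← T.edge_snd_sub_fst, ← T'.edge_snd_sub_fst, ← hk, ← hk']
    have hup : T.up ≠ T'.up := fun hup => hne (eq_of_up_eq_of_edge_eq hup (hk.symm.trans hk'))
    refine ⟨k, (eq_of_up_eq_of_edge_eq (k := k) ((up_adjacent_eq_iff k).2 hup) ?_).symm⟩
    rw [edge_adjacent, ← hk, hk']
  · rintro ⟨k, rfl⟩
    exact ⟨T.edge k, Finset.mem_inter.2 ⟨T.edge_mem_edgeFinset k,
      T.edge_adjacent k ▸ (T.adjacent k).edge_mem_edgeFinset k⟩⟩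

lemma forall_parallel_eq_iff {h : Ed → ℝ} :
    (∀ e ∈ T.edgeFinset, ∀ e' ∈ T'.edgeFinset,
      e ≠ e' → e.2 - e.1 = e'.2 - e'.1 → h e = h e') ↔
      ∀ k, h (T.edge k) = h (T'.edge k) := by
  refine ⟨fun hpar k => ?_, fun hpar e he e' he' _ hdir => ?_⟩
  · by_cases hk : T.edge k = T'.edge k
    · rw [hk]
    · exact hpar _ (T.edge_mem_edgeFinset k) _ (T'.edge_mem_edgeFinset k) hk
        (by rw [edge_snd_sub_fst, edge_snd_sub_fst])
  · obtain ⟨k, rfl⟩ := T.mem_edgeFinset.1 he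
    obtain ⟨k', rfl⟩ := T'.mem_edgeFinset.1 he'
    rw [edge_snd_sub_fst, edge_snd_sub_fst] at hdir
    rw [xiv_injective hdir, hpar]

/-- The sum of the squares of the barycentric coordinates, which is an increasing function of the
distance between `x` and the barycentre of `T`. -/
def coordSq (T : GridTriangle) (x : Pt) : ℝ := ∑ k, T.basis.coord k x ^ 2

lemma coordSq_adjacent (k : Fin 3) :
    (T.adjacent k).coordSq x = T.coordSq x + 2 * T.basis.coord k x := by
  have hsum := T.basis.sum_coord_apply_eq_one x
  rw [sum_fin_three_eq _ k] at hsum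
  simp only [coordSq, sum_fin_three_eq _ k, coord_adjacent]
  simp only [if_true, zero_sub, neg_sq, add_eq_left, one_ne_zero, Fin.reduceEq, if_false]
  linear_combination (-2) * hsum

lemma eventually_lineMap_mem_interior_adjacent {k : Fin 3} (hx : T.basis.coord k x < 0) :
    ∀ᶠ t in 𝓝[>] (0 : ℝ), AffineMap.lineMap
      (midpoint ℝ (T.vertex (k + 1)) (T.vertex (k + 2))) x t ∈ interior (T.adjacent k).region := by
  set b := (T.adjacent k).basis with hb
  set m := midpoint ℝ (T.vertex (k + 1)) (T.vertex (k + 2)) with hm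
  have hm₀ : b.coord k m = 0 := by
    simp [hm, hb, coord_adjacent, ← basis_apply, AffineMap.map_midpoint]
  simp only [mem_interior_region_iff, AffineMap.apply_lineMap, Filter.eventually_all]
  intro j
  obtain rfl | hj := eq_or_ne j k
  · have hx' : 0 < b.coord j x := by simpa [hb, coord_adjacent] using hx
    filter_upwards [self_mem_nhdsWithin] with t ht
    rw [hm₀, AffineMap.lineMap_apply_module', sub_zero, add_zero]
    exact mul_pos ht hx'
  · have hm_pos : 0 < b.coord j m := by
      rw [hm, AffineMap.map_midpoint, midpoint_eq_smul_add]
      simp only [hb, coord_adjacent, ← basis_apply, AffineBasis.coord_apply, hj]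
      fin_cases k <;> fin_cases j <;> simp_all
    refine nhdsWithin_le_nhds (AffineMap.lineMap_continuous.tendsto' 0 (b.coord j m) ?_
      |>.eventually_const_lt hm_pos)
    exact AffineMap.lineMap_apply_zero _ _

end GridTriangle

namespace ConvexGrid

variable {G : ConvexGrid} {T : GridTriangle} {x : Pt}

lemma region_subset (hT : T ∈ G.tris) : T.region ⊆ G.region :=
  Set.subset_biUnion_of_mem (u := GridTriangle.region) hT

lemma mem_region_iff : x ∈ G.region ↔ ∃ T ∈ G.tris, x ∈ T.region := by
  simp [region]

lemma edge_mem_edges (hT : T ∈ G.tris) (k : Fin 3) : T.edge k ∈ G.edges :=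
  Finset.mem_biUnion.2 ⟨T, hT, T.edge_mem_edgeFinset k⟩

lemma adjacent_mem_tris (hT : T ∈ G.tris) (hx : x ∈ G.region) {k : Fin 3}
    (hk : T.basis.coord k x < 0) : T.adjacent k ∈ G.tris := by
  have hm : midpoint ℝ (T.vertex (k + 1)) (T.vertex (k + 2)) ∈ G.region :=
    region_subset hT ((convex_convexHull ℝ _).midpoint_mem (T.vertex_mem_region _)
      (T.vertex_mem_region _))
  obtain ⟨t, ht, ht₀, ht₁⟩ := ((GridTriangle.eventually_lineMap_mem_interior_adjacent hk).and
    (Ioo_mem_nhdsGT one_pos)).exists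
  obtain ⟨T', hT', htT'⟩ := mem_region_iff.1 (G.convex.lineMap_mem hm hx ⟨ht₀.le, ht₁.le⟩)
  have hbase : IsLatticeVec ((T.adjacent k).base - T'.base) := by
    simpa using (T.isLatticeVec_adjacent_base_sub_base k).add (G.aligned T hT T' hT')
  rwa [GridTriangle.eq_of_mem_interior hbase ht htT']

end ConvexGrid

namespace GridTriangle

variable (T : GridTriangle) (k : Fin 3)

/-- The slack of `h` in the inequality of the little rhombus `T ∪ T.adjacent k`: for `h` induced by
a piecewise affine `g`, the excess at `T.vertex k` of the piece of `g` on `T.adjacent k` over the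
piece on `T`. -/
def rhombusSlack : (Ed → ℝ) →ₗ[ℝ] ℝ :=
  T.sign • (.proj ((T.adjacent k).edge (k + 1)) - .proj (T.edge (k + 1)))

lemma rhombusSlack_apply (h : Ed → ℝ) : T.rhombusSlack k h
    = T.sign * (h ((T.adjacent k).edge (k + 1)) - h (T.edge (k + 1))) := rfl

lemma rhombusSlack_lineMap (h h' : Ed → ℝ) (c : ℝ) : T.rhombusSlack k (AffineMap.lineMap h h' c)
    = (1 - c) * T.rhombusSlack k h + c * T.rhombusSlack k h' := by
  simp [AffineMap.lineMap_apply_module]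

lemma rhombusSlack_eq_zero_iff {h : Ed → ℝ} :
    T.rhombusSlack k h = 0 ↔ h (T.edge (k + 1)) = h ((T.adjacent k).edge (k + 1)) := by
  rw [rhombusSlack_apply, mul_eq_zero_iff_left (left_ne_zero_of_mul_eq_one T.sign_mul_sign),
    sub_eq_zero, eq_comm]

lemma sum_edge (h : Ed → ℝ) : ∑ k, h (T.edge k) = h T.e0 + h T.e1 + h T.e2 := by
  obtain ⟨b, _ | _⟩ := T <;> simp [Fin.sum_univ_three, edge, vertex, e0, e1, e2]; ring

end GridTriangle

namespace ConvexGrid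

variable {G : ConvexGrid} {g g' : Pt → ℝ} {φ φ' : GridTriangle → Pt →ᵃ[ℝ] ℝ} {h h' : Ed → ℝ}
  {T : GridTriangle} {k : Fin 3}

/-- The function `g` on the region of `G` is affine on the little triangles, with pieces `φ T`,
and induces `h`. -/
structure IsPotential (G : ConvexGrid) (g : Pt → ℝ) (φ : GridTriangle → Pt →ᵃ[ℝ] ℝ)
    (h : Ed → ℝ) : Prop where
  eq_piece : ∀ T ∈ G.tris, ∀ x ∈ T.region, g x = φ T x
  eq_sub : ∀ e ∈ G.edges, h e = g e.2 - g e.1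

/-- The little rhombi of `G`: pairs `(T, k)` such that `T` and `T.adjacent k` both belong to `G`, so
each rhombus occurs twice. -/
def rhombi (G : ConvexGrid) : Finset (GridTriangle × Fin 3) :=
  (G.tris ×ˢ Finset.univ).filter fun ρ => ρ.1.adjacent ρ.2 ∈ G.tris

lemma mem_rhombi : (T, k) ∈ G.rhombi ↔ T ∈ G.tris ∧ T.adjacent k ∈ G.tris := by
  simp [rhombi]

lemma rhombusSlack_congr (heq : ∀ e ∈ G.edges, h e = h' e) (hρ : (T, k) ∈ G.rhombi) :
    T.rhombusSlack k h = T.rhombusSlack k h' := by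
  obtain ⟨hT, hN⟩ := mem_rhombi.1 hρ
  simp only [GridTriangle.rhombusSlack_apply, heq _ (edge_mem_edges hT _),
    heq _ (edge_mem_edges hN _)]

namespace IsPotential

lemma lineMap (H : G.IsPotential g φ h) (H' : G.IsPotential g' φ' h') (c : ℝ) :
    G.IsPotential (AffineMap.lineMap g g' c) (AffineMap.lineMap φ φ' c)
      (AffineMap.lineMap h h' c) where
  eq_piece T hT x hx := by
    simp [AffineMap.lineMap_apply_module', H.eq_piece T hT x hx, H'.eq_piece T hT x hx]
  eq_sub e he := by
    simp [AffineMap.lineMap_apply_module', H.eq_sub e he, H'.eq_sub e he]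
    ring

lemma piece_eq_piece (H : G.IsPotential g φ h) {T' : GridTriangle} (hT : T ∈ G.tris)
    (hT' : T' ∈ G.tris) {x : Pt} (hx : x ∈ T.region) (hx' : x ∈ T'.region) : φ T x = φ T' x :=
  (H.eq_piece T hT x hx).symm.trans (H.eq_piece T' hT' x hx')

lemma linear_xiv (H : G.IsPotential g φ h) (hT : T ∈ G.tris) (k : Fin 3) :
    (φ T).linear (xiv k) = h (T.edge k) := by
  rw [H.eq_sub _ (edge_mem_edges hT k), H.eq_piece T hT _ (T.edge_fst_mem_region k),
    H.eq_piece T hT _ (T.edge_snd_mem_region k), ← T.edge_snd_sub_fst k]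
  exact (φ T).linearMap_vsub _ _

lemma sum_edge_eq_zero (H : G.IsPotential g φ h) (hT : T ∈ G.tris) :
    ∑ k, h (T.edge k) = 0 := by
  simp only [← H.linear_xiv hT, Fin.sum_univ_three, ← map_add, xiv_two]
  simp

lemma isCocirculation (H : G.IsPotential g φ h) : IsCocirculation G h := fun T hT =>
  T.sum_edge h ▸ H.sum_edge_eq_zero hT

lemma piece_adjacent_sub_piece (H : G.IsPotential g φ h) (hρ : (T, k) ∈ G.rhombi) (x : Pt) :
    φ (T.adjacent k) x - φ T x = T.rhombusSlack k h * T.basis.coord k x := by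
  obtain ⟨hT, hN⟩ := mem_rhombi.1 hρ
  have h₁ : φ (T.adjacent k) (T.vertex (k + 1)) = φ T (T.vertex (k + 1)) :=
    H.piece_eq_piece hN hT (T.vertex_adjacent_add_two k ▸ GridTriangle.vertex_mem_region _ _)
      (T.vertex_mem_region _)
  have h₂ : φ (T.adjacent k) (T.vertex (k + 2)) = φ T (T.vertex (k + 2)) :=
    H.piece_eq_piece hN hT (T.vertex_adjacent_add_one k ▸ GridTriangle.vertex_mem_region _ _)
      (T.vertex_mem_region _)
  have h₀ : φ (T.adjacent k) (T.vertex k) - φ T (T.vertex k) = T.rhombusSlack k h := by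
    have hk : T.vertex k = T.sign • xiv (k + 1) +ᵥ T.vertex (k + 2) := by
      rw [← T.vertex_sub_vertex (k + 1), vadd_eq_add]
      fin_cases k <;> simp
    rw [hk, AffineMap.map_vadd, AffineMap.map_vadd, h₂, map_smul, map_smul, H.linear_xiv hT,
      H.linear_xiv hN, GridTriangle.rhombusSlack_apply]
    simp only [smul_eq_mul, vadd_eq_add]
    ring
  suffices φ (T.adjacent k) - φ T = T.rhombusSlack k h • T.basis.coord k from
    congrArg (· x) this
  refine AffineMap.ext_on T.basis.tot ?_
  rintro _ ⟨j, rfl⟩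
  rcases eq_or_eq_add_one_or_eq_add_two k j with rfl | rfl | rfl
  · simpa [← GridTriangle.basis_apply] using h₀
  · simpa [← GridTriangle.basis_apply, sub_eq_zero] using h₁
  · simpa [← GridTriangle.basis_apply, sub_eq_zero] using h₂

lemma le_piece_of_concaveOn (H : G.IsPotential g φ h) (hg : ConcaveOn ℝ G.region g)
    (hT : T ∈ G.tris) {x : Pt} (hx : x ∈ G.region) : g x ≤ φ T x := by
  have ha : Finset.univ.centroid ℝ T.basis ∈ interior T.region := by
    rw [GridTriangle.region_eq_convexHull_range]
    exact T.basis.centroid_mem_interior_convexHull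
  refine le_affineMap_of_concaveOn_of_eventuallyEq hg (region_subset hT (interior_subset ha)) ?_ hx
  filter_upwards [mem_nhdsWithin_of_mem_nhds (mem_interior_iff_mem_nhds.1 ha)] with y hy
  exact H.eq_piece T hT y hy

lemma rhombusSlack_nonneg_of_concaveOn (H : G.IsPotential g φ h) (hg : ConcaveOn ℝ G.region g)
    (hρ : (T, k) ∈ G.rhombi) : 0 ≤ T.rhombusSlack k h := by
  obtain ⟨hT, hN⟩ := mem_rhombi.1 hρ
  have hk := T.vertex_mem_region k
  calc 0 ≤ φ (T.adjacent k) (T.vertex k) - φ T (T.vertex k) := by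
        rw [← H.eq_piece T hT _ hk, sub_nonneg]
        exact H.le_piece_of_concaveOn hg hN (region_subset hT hk)
    _ = T.rhombusSlack k h := by
        rw [H.piece_adjacent_sub_piece hρ, ← T.basis_apply, AffineBasis.coord_apply, if_pos rfl,
          mul_one]

/-- Among the triangles whose piece at `x` is at most `φ T x`, one nearest to `x` must contain `x`:
otherwise crossing an edge that separates it from `x` gets closer without increasing the piece. -/
lemma le_piece_of_rhombusSlack_nonneg (H : G.IsPotential g φ h)
    (hslack : ∀ ρ ∈ G.rhombi, 0 ≤ ρ.1.rhombusSlack ρ.2 h) (hT : T ∈ G.tris) {x : Pt}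
    (hx : x ∈ G.region) : g x ≤ φ T x := by
  obtain ⟨S, hS, hmin⟩ := (G.tris.filter fun S => φ S x ≤ φ T x).exists_min_image
    (GridTriangle.coordSq · x) ⟨T, Finset.mem_filter.2 ⟨hT, le_rfl⟩⟩
  obtain ⟨hS, hST⟩ := Finset.mem_filter.1 hS
  suffices hxS : x ∈ S.region from (H.eq_piece S hS x hxS).trans_le hST
  by_contra hxS
  obtain ⟨k, hk⟩ : ∃ k, S.basis.coord k x < 0 := by
    simpa [GridTriangle.mem_region_iff] using hxS
  have hN := adjacent_mem_tris hS hx hk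
  have hρ := mem_rhombi.2 ⟨hS, hN⟩
  have hNS : φ (S.adjacent k) x ≤ φ S x := by
    rw [← sub_nonpos, H.piece_adjacent_sub_piece hρ]
    exact mul_nonpos_of_nonneg_of_nonpos (hslack _ hρ) hk.le
  have hcloser := hmin _ (Finset.mem_filter.2 ⟨hN, hNS.trans hST⟩)
  rw [GridTriangle.coordSq_adjacent] at hcloser
  linarith

lemma concaveOn_iff (H : G.IsPotential g φ h) :
    ConcaveOn ℝ G.region g ↔ ∀ ρ ∈ G.rhombi, 0 ≤ ρ.1.rhombusSlack ρ.2 h := by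
  refine ⟨fun hg ρ hρ => H.rhombusSlack_nonneg_of_concaveOn hg hρ, fun hslack => ?_⟩
  refine concaveOn_of_forall_exists_affineMap G.convex fun x hx => ?_
  obtain ⟨T, hT, hxT⟩ := mem_region_iff.1 hx
  exact ⟨φ T, (H.eq_piece T hT x hxT).symm,
    fun y hy => H.le_piece_of_rhombusSlack_nonneg hslack hT hy⟩

lemma rhombusSlack_eq_zero_iff_forall (H : G.IsPotential g φ h) (hρ : (T, k) ∈ G.rhombi) :
    T.rhombusSlack k h = 0 ↔ ∀ j, h (T.edge j) = h ((T.adjacent k).edge j) := by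
  obtain ⟨hT, hN⟩ := mem_rhombi.1 hρ
  rw [GridTriangle.rhombusSlack_eq_zero_iff]
  refine ⟨fun h₁ j => ?_, fun hall => hall _⟩
  have h₀ := congrArg h (T.edge_adjacent k)
  have hsum := (H.sum_edge_eq_zero hT).trans (H.sum_edge_eq_zero hN).symm
  rw [sum_fin_three_eq _ k, sum_fin_three_eq _ k] at hsum
  rcases eq_or_eq_add_one_or_eq_add_two k j with rfl | rfl | rfl
  exacts [h₀.symm, h₁, by linarith]

end IsPotential

end ConvexGrid

lemma isConcaveCocirculation_iff {G : ConvexGrid} {h : Ed → ℝ} :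
    IsConcaveCocirculation G h ↔
      (∃ g φ, G.IsPotential g φ h) ∧ ∀ ρ ∈ G.rhombi, 0 ≤ ρ.1.rhombusSlack ρ.2 h := by
  constructor
  · rintro ⟨-, g, hg, haff, hsub⟩
    choose! φ hφ using haff
    have H : G.IsPotential g φ h := ⟨hφ, hsub⟩
    exact ⟨⟨g, φ, H⟩, H.concaveOn_iff.1 hg⟩
  · rintro ⟨⟨g, φ, H⟩, hslack⟩
    exact ⟨H.isCocirculation, g, H.concaveOn_iff.2 hslack,
      fun T hT => ⟨φ T, H.eq_piece T hT⟩, H.eq_sub⟩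

section

variable {G : ConvexGrid} {F : Set Ed} {h₀ h h' : Ed → ℝ}

namespace IsConcaveCocirculation

lemma rhombusSlack_nonneg (hh : IsConcaveCocirculation G h) {ρ : GridTriangle × Fin 3}
    (hρ : ρ ∈ G.rhombi) : 0 ≤ ρ.1.rhombusSlack ρ.2 h :=
  (isConcaveCocirculation_iff.1 hh).2 ρ hρ

lemma rhombusSlack_lineMap_eq_zero_iff (hh : IsConcaveCocirculation G h)
    (hh' : IsConcaveCocirculation G h') {c : ℝ} (hc₀ : 0 < c) (hc₁ : c < 1)
    {ρ : GridTriangle × Fin 3} (hρ : ρ ∈ G.rhombi) :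
    ρ.1.rhombusSlack ρ.2 (AffineMap.lineMap h h' c) = 0 ↔
      ρ.1.rhombusSlack ρ.2 h = 0 ∧ ρ.1.rhombusSlack ρ.2 h' = 0 := by
  have hc := sub_pos.2 hc₁
  rw [GridTriangle.rhombusSlack_lineMap, add_eq_zero_iff_of_nonneg
      (mul_nonneg hc.le (hh.rhombusSlack_nonneg hρ))
      (mul_nonneg hc₀.le (hh'.rhombusSlack_nonneg hρ)),
    mul_eq_zero_iff_left hc.ne', mul_eq_zero_iff_left hc₀.ne']

lemma sameTiling_iff (hh : IsConcaveCocirculation G h) (hh' : IsConcaveCocirculation G h') :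
    SameTiling G h h' ↔
      ∀ ρ ∈ G.rhombi, ρ.1.rhombusSlack ρ.2 h = 0 ↔ ρ.1.rhombusSlack ρ.2 h' = 0 := by
  obtain ⟨⟨g, φ, H⟩, -⟩ := isConcaveCocirculation_iff.1 hh
  obtain ⟨⟨g', φ', H'⟩, -⟩ := isConcaveCocirculation_iff.1 hh'
  simp only [SameTiling, GridTriangle.forall_parallel_eq_iff]
  constructor
  · rintro htiling ⟨T, k⟩ hρ
    obtain ⟨hT, hN⟩ := ConvexGrid.mem_rhombi.1 hρ
    rw [H.rhombusSlack_eq_zero_iff_forall hρ, H'.rhombusSlack_eq_zero_iff_forall hρ]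
    exact htiling T hT _ hN (T.ne_adjacent k)
      ((GridTriangle.inter_edgeFinset_nonempty_iff (T.ne_adjacent k)).2 ⟨k, rfl⟩)
  · intro htight T hT T' hT' hne hinter
    obtain ⟨k, rfl⟩ := (GridTriangle.inter_edgeFinset_nonempty_iff hne).1 hinter
    have hρ := ConvexGrid.mem_rhombi.2 ⟨hT, hT'⟩
    rw [← H.rhombusSlack_eq_zero_iff_forall hρ, ← H'.rhombusSlack_eq_zero_iff_forall hρ]
    exact htight _ hρ

end IsConcaveCocirculation

lemma lineMap_mem_CC (hh : h ∈ CC G F h₀) (hh' : h' ∈ CC G F h₀) {c : ℝ}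
    (hslack : ∀ ρ ∈ G.rhombi, 0 ≤ ρ.1.rhombusSlack ρ.2 (AffineMap.lineMap h h' c)) :
    AffineMap.lineMap h h' c ∈ CC G F h₀ := by
  obtain ⟨⟨g, φ, H⟩, -⟩ := isConcaveCocirculation_iff.1 hh.1
  obtain ⟨⟨g', φ', H'⟩, -⟩ := isConcaveCocirculation_iff.1 hh'.1
  refine ⟨isConcaveCocirculation_iff.2 ⟨⟨_, _, H.lineMap H' c⟩, hslack⟩, fun e he => ?_⟩
  rw [AffineMap.pi_lineMap_apply, hh.2 e he, hh'.2 e he, AffineMap.lineMap_same_apply]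

lemma lineMap_mem_CC_of_mem_Icc (hh : h ∈ CC G F h₀) (hh' : h' ∈ CC G F h₀) {c : ℝ}
    (hc : c ∈ Set.Icc 0 1) : AffineMap.lineMap h h' c ∈ CC G F h₀ :=
  lineMap_mem_CC hh hh' fun ρ hρ => by
    rw [GridTriangle.rhombusSlack_lineMap]
    exact add_nonneg (mul_nonneg (sub_nonneg.2 hc.2) (hh.1.rhombusSlack_nonneg hρ))
      (mul_nonneg hc.1 (hh'.1.rhombusSlack_nonneg hρ))

lemma exists_pos_lineMap_mem_CC (hh : h ∈ CC G F h₀) (hh' : h' ∈ CC G F h₀)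
    (htight : ∀ ρ ∈ G.rhombi, ρ.1.rhombusSlack ρ.2 h = 0 → ρ.1.rhombusSlack ρ.2 h' = 0) :
    ∃ ε > (0 : ℝ), AffineMap.lineMap h h' ε ∈ CC G F h₀ ∧
      AffineMap.lineMap h h' (-ε) ∈ CC G F h₀ := by
  obtain ⟨ε, hε, hle⟩ := exists_pos_mul_abs_le G.rhombi
    (fun _ hρ => hh.1.rhombusSlack_nonneg hρ)
    (b := fun ρ => ρ.1.rhombusSlack ρ.2 h' - ρ.1.rhombusSlack ρ.2 h)
    fun ρ hρ h₀ => by rw [h₀, htight ρ hρ h₀, sub_zero]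
  have hmem (c : ℝ) (hc : |c| = ε) : AffineMap.lineMap h h' c ∈ CC G F h₀ := by
    refine lineMap_mem_CC hh hh' fun ρ hρ => ?_
    have hρle := hle ρ hρ
    rw [← hc, ← abs_mul] at hρle
    rw [GridTriangle.rhombusSlack_lineMap]
    linarith [neg_le_of_abs_le hρle]
  exact ⟨ε, hε, hmem ε (abs_of_pos hε), hmem (-ε) (by rw [abs_neg, abs_of_pos hε])⟩

lemma sameTiling_lineMap (hh : h ∈ CC G F h₀) {h₁ h₂ : Ed → ℝ} (hh₁ : h₁ ∈ CC G F h₀)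
    (hh₂ : h₂ ∈ CC G F h₀) {c c' : ℝ} (hc : c ∈ Set.Ioo 0 1) (hc' : c' ∈ Set.Ioo 0 1)
    (heq : ∀ e ∈ G.edges, h e = AffineMap.lineMap h₁ h₂ c e) :
    SameTiling G h (AffineMap.lineMap h₁ h₂ c') := by
  have hmem := lineMap_mem_CC_of_mem_Icc hh₁ hh₂ (Set.Ioo_subset_Icc_self hc')
  refine (hh.1.sameTiling_iff hmem.1).2 fun ρ hρ => ?_
  rw [ConvexGrid.rhombusSlack_congr heq hρ,
    hh₁.1.rhombusSlack_lineMap_eq_zero_iff hh₂.1 hc.1 hc.2 hρ,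
    hh₁.1.rhombusSlack_lineMap_eq_zero_iff hh₂.1 hc'.1 hc'.2 hρ]

end

/-- Lemma on tilings.  h ∈ C(G,h₀) is a vertex of C(G,h₀) iff h is
uniquely determined by its tiling. -/
theorem stmt6 (G : ConvexGrid) (F : Set Ed) (hF : F ⊆ ↑G.edges) (h₀ : Ed → ℝ)
    (h : Ed → ℝ) (hh : h ∈ CC G F h₀) :
    IsVertexOf G (CC G F h₀) h ↔
      ∀ h' ∈ CC G F h₀, SameTiling G h h' → ∀ e ∈ G.edges, h' e = h e := by
  constructor
  · rintro ⟨-, hvertex⟩ h' hh' htiling e he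
    obtain ⟨ε, hε, hpos, hneg⟩ := exists_pos_lineMap_mem_CC hh hh' fun ρ hρ =>
      ((hh.1.sameTiling_iff hh'.1).1 htiling ρ hρ).1
    have hends := hvertex _ hpos _ hneg (fun e _ => by
      simp only [AffineMap.pi_lineMap_apply, AffineMap.lineMap_apply_ring']
      ring) e he
    rw [AffineMap.pi_lineMap_apply, AffineMap.pi_lineMap_apply] at hends
    exact ((AffineMap.lineMap_eq_lineMap_iff.1 hends).resolve_right (self_ne_neg.2 hε.ne')).symm
  · refine fun hunique => ⟨hh, fun h₁ hh₁ h₂ hh₂ hmid => ?_⟩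
    replace hmid : ∀ e ∈ G.edges, h e = AffineMap.lineMap h₁ h₂ (1 / 2 : ℝ) e := fun e he => by
      rw [hmid e he, AffineMap.pi_lineMap_apply, AffineMap.lineMap_apply_ring']
      ring
    have hquarter : AffineMap.lineMap h₁ h₂ (1 / 4 : ℝ) ∈ CC G F h₀ :=
      lineMap_mem_CC_of_mem_Icc hh₁ hh₂ (by norm_num)
    have htiling := sameTiling_lineMap hh hh₁ hh₂ (c' := 1 / 4) (by norm_num) (by norm_num) hmid
    intro e he
    have heq := (hunique _ hquarter htiling e he).trans (hmid e he)
    rw [AffineMap.pi_lineMap_apply, AffineMap.pi_lineMap_apply] at heq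
    exact (AffineMap.lineMap_eq_lineMap_iff.1 heq).resolve_right (by norm_num)
end
end
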